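/- arXiv:0810.0443 — 2 statements merged into one kernel-verified Lean document; each statement's English description precedes it below -/
import Mathlib

section
/- Let F_k be a finitely generated free group and let φ be an injective endomorphism of F_k. Then for every sufficiently large prime p, the group HNN_φ(F_k) has a subgroup N of finite index such that N is residually (finite p) and N is itself an ascending HNN extension of a free group, i.e. N is generated by F_k ∩ N together with an element t₁ = t^m (for some m ≥ 1) satisfying t₁(F_k ∩ N)t₁⁻¹ ⊆ F_k ∩ N, with F_k ∩ N free. -/
/-- The defining relations of the mapping torus (ascending HNN extension)
`HNN_φ(F_k) = ⟨x₁,…,x_k, t ∣ t xᵢ t⁻¹ = φ(xᵢ)⟩`, with generators `Option (Fin k)`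
where `none` is the stable letter `t` and `some i` is `xᵢ`. -/
def mappingTorusRels (k : ℕ) (φ : FreeGroup (Fin k) →* FreeGroup (Fin k)) :
    Set (FreeGroup (Option (Fin k))) :=
  { r | ∃ i : Fin k,
      r = FreeGroup.of none * FreeGroup.map Option.some (FreeGroup.of i) *
          (FreeGroup.of none)⁻¹ * (FreeGroup.map Option.some (φ (FreeGroup.of i)))⁻¹ }

/-- The mapping torus `HNN_φ(F_k)` of an endomorphism `φ` of the free group `F_k`. -/
abbrev MappingTorus (k : ℕ) (φ : FreeGroup (Fin k) →* FreeGroup (Fin k)) : Type :=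
  PresentedGroup (mappingTorusRels k φ)

/-- The copy of the free group `F_k` inside the mapping torus, i.e. the subgroup generated by
the images of `x₁,…,x_k`. -/
def freeFibre (k : ℕ) (φ : FreeGroup (Fin k) →* FreeGroup (Fin k)) :
    Subgroup (MappingTorus k φ) :=
  Subgroup.closure (Set.range fun i : Fin k => PresentedGroup.of (some i))

/-- A group `G` is residually (finite `p`) if every nontrivial element has a nontrivial
image under some homomorphism onto a finite `p`-group. -/
def ResiduallyFiniteP (p : ℕ) (G : Type*) [Group G] : Prop :=
  ∀ g : G, g ≠ 1 → ∃ (Q : Type) (_ : Group Q) (_ : Fintype Q) (f : G →* Q),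
    Function.Surjective f ∧ IsPGroup p Q ∧ f g ≠ 1


open MvPolynomial

section NormalForm
variable {ι K : Type*} [CommRing K]

/-- normal form of a monomial modulo `x_i ^ Q - f_i`. -/
noncomputable def nfMon (f : ι → MvPolynomial ι K) (Q : ℕ) (hf : ∀ i, (f i).totalDegree < Q)
    (e : ι →₀ ℕ) : MvPolynomial ι K :=
  open Classical in
  if h : ∃ i, Q ≤ e i then
    ∑ d ∈ (f h.choose).support.attach,
      coeff d.1 (f h.choose) • nfMon f Q hf (e - Finsupp.single h.choose Q + d.1)
  else monomial e 1
termination_by e.degree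
decreasing_by
  have h1 := h.choose_spec
  have h2 := le_totalDegree d.2
  have h3 := hf h.choose
  have h4 : e - Finsupp.single h.choose Q + Finsupp.single h.choose Q = e := by
    apply tsub_add_cancel_of_le
    simpa using h1
  have h5 := congrArg Finsupp.degree h4
  rw [map_add, Finsupp.degree_single] at h5
  rw [map_add]
  have h6 : d.1.degree = d.1.sum fun _ e => e := rfl
  omega

noncomputable def nfLin (f : ι → MvPolynomial ι K) (Q : ℕ) (hf : ∀ i, (f i).totalDegree < Q) :
    MvPolynomial ι K →ₗ[K] MvPolynomial ι K :=
  (basisMonomials ι K).constr K (nfMon f Q hf)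

variable (f : ι → MvPolynomial ι K) (Q : ℕ) (hf : ∀ i, (f i).totalDegree < Q)

theorem nfLin_monomial (e : ι →₀ ℕ) (c : K) :
    nfLin f Q hf (monomial e c) = c • nfMon f Q hf e := by
  have : (monomial e c : MvPolynomial ι K) = c • basisMonomials ι K e := by
    simp [smul_monomial]
  rw [this, map_smul, nfLin, Module.Basis.constr_basis]

theorem nfLin_monomial_mul (e : ι →₀ ℕ) (g : MvPolynomial ι K) :
    nfLin f Q hf (monomial e 1 * g) = ∑ d ∈ g.support, coeff d g • nfMon f Q hf (e + d) := by
  conv_lhs => rw [g.as_sum, Finset.mul_sum, map_sum]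
  refine Finset.sum_congr rfl fun d _ => ?_
  rw [monomial_mul, one_mul, nfLin_monomial]

theorem nfMon_irred (e : ι →₀ ℕ) (h : ∀ i, e i < Q) : nfMon f Q hf e = monomial e 1 := by
  rw [nfMon, dif_neg]
  push Not
  exact h

theorem nfMon_red (e : ι →₀ ℕ) : ∀ i, Q ≤ e i →
    nfMon f Q hf e = nfLin f Q hf (monomial (e - Finsupp.single i Q) 1 * f i) := by
  induction hn : e.degree using Nat.strong_induction_on generalizing e with
  | _ n ih =>
  intro i hi
  have h : ∃ i, Q ≤ e i := ⟨i, hi⟩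
  have e1 : nfMon f Q hf e =
      nfLin f Q hf (monomial (e - Finsupp.single h.choose Q) 1 * f h.choose) := by
    rw [nfMon, dif_pos h, nfLin_monomial_mul]
    exact Finset.sum_attach (f h.choose).support
      (fun d => coeff d (f h.choose) • nfMon f Q hf (e - Finsupp.single h.choose Q + d))
  have h1 := h.choose_spec
  generalize h.choose = j at e1 h1
  rw [e1]
  by_cases hij : i = j
  · rw [hij]
  -- general reduction
  have key : ∀ i j, i ≠ j → Q ≤ e i → Q ≤ e j →
      nfLin f Q hf (monomial (e - Finsupp.single j Q) 1 * f j) =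
      nfLin f Q hf (monomial (e - Finsupp.single j Q - Finsupp.single i Q) 1 * f i * f j) := by
    intro i j hij hi hj
    have hjd : (e - Finsupp.single j Q).degree + Q = n := by
      rw [← hn]
      have h4 : e - Finsupp.single j Q + Finsupp.single j Q = e := by
        apply tsub_add_cancel_of_le
        simpa using hj
      have h5 := congrArg Finsupp.degree h4
      rw [map_add, Finsupp.degree_single] at h5
      exact h5
    rw [nfLin_monomial_mul, mul_comm _ (f j), ]
    conv_rhs => rw [(f j).as_sum, Finset.sum_mul, map_sum]
    refine Finset.sum_congr rfl fun d hd => ?_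
    have h2 := le_totalDegree hd
    have h3 := hf j
    have h6 : d.degree = d.sum fun _ e => e := rfl
    have hQ : Q ≤ (e - Finsupp.single j Q + d) i := by
      simp [Finsupp.single_eq_of_ne hij]
      omega
    rw [ih _ (by rw [map_add]; omega) (e - Finsupp.single j Q + d) rfl i hQ, ← map_smul]
    congr 1
    have h7 : e - Finsupp.single j Q + d - Finsupp.single i Q
        = d + (e - Finsupp.single j Q - Finsupp.single i Q) := by
      have : Finsupp.single i Q ≤ e - Finsupp.single j Q := by
        simpa [Finsupp.single_eq_of_ne hij] using hi
      rw [add_comm _ d, add_tsub_assoc_of_le this]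
    rw [h7, ← mul_assoc, monomial_mul, mul_one, ← smul_mul_assoc, smul_monomial, smul_eq_mul, mul_one]
  rw [key i j hij hi h1, key j i (Ne.symm hij) h1 hi, mul_assoc, mul_assoc, mul_comm (f i),
    tsub_tsub, tsub_tsub, add_comm (Finsupp.single i Q)]

theorem nfLin_gen (i : ι) (g : MvPolynomial ι K) : nfLin f Q hf (g * (X i ^ Q - f i)) = 0 := by
  induction g using MvPolynomial.induction_on' with
  | add p q hp hq => rw [add_mul, map_add, hp, hq, add_zero]
  | monomial e c =>
    have : (monomial e c : MvPolynomial ι K) = c • monomial e 1 := by simp [smul_monomial]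
    rw [this, smul_mul_assoc, map_smul, mul_sub, map_sub]
    have h2 : (monomial e 1 * X i ^ Q : MvPolynomial ι K) = monomial (e + Finsupp.single i Q) 1 := by
      rw [X_pow_eq_monomial, monomial_mul, one_mul]
    rw [h2, nfLin_monomial, one_smul, nfMon_red f Q hf _ i (by simp), add_tsub_cancel_right,
      sub_self, smul_zero]

theorem nfLin_of_deg (g : MvPolynomial ι K) (hg : g.totalDegree < Q) : nfLin f Q hf g = g := by
  conv_lhs => rw [g.as_sum]
  conv_rhs => rw [g.as_sum]
  rw [map_sum]
  refine Finset.sum_congr rfl fun d hd => ?_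
  rw [nfLin_monomial, nfMon_irred, smul_monomial, smul_eq_mul, mul_one]
  intro i
  have h2 := le_totalDegree hd
  have h6 : d.degree = d.sum fun _ e => e := rfl
  have := Finsupp.le_degree i d
  omega

theorem eq_zero_of_mem_span (g : MvPolynomial ι K) (hg : g.totalDegree < Q)
    (hf : ∀ i, (f i).totalDegree < Q)
    (h : g ∈ Ideal.span (Set.range fun i => (X i ^ Q - f i : MvPolynomial ι K))) : g = 0 := by
  rw [← nfLin_of_deg f Q hf g hg]
  clear hg
  induction h using Submodule.span_induction with
  | mem x hx => obtain ⟨i, rfl⟩ := hx; simpa using nfLin_gen f Q hf i 1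
  | zero => simp
  | add x y _ _ hx hy => rw [map_add, hx, hy, add_zero]
  | smul a x hx h => 
    refine Submodule.span_induction (p := fun x _ => ∀ a, nfLin f Q hf (a • x) = 0) ?_ ?_ ?_ ?_ hx a
    · rintro _ ⟨i, rfl⟩ a; exact nfLin_gen f Q hf i a
    · simp
    · intro x y _ _ hx hy a; rw [smul_add, map_add, hx, hy, add_zero]
    · intro b x _ hx a; rw [smul_smul]; exact hx _
end NormalForm

/-- evaluation of integer polynomials in any commutative ring -/
noncomputable def zev {ι A : Type*} [CommRing A] (z : ι → A) : MvPolynomial ι ℤ →+* A :=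
  eval₂Hom (Int.castRingHom A) z

@[simp] theorem zev_X {ι A : Type*} [CommRing A] (z : ι → A) (i : ι) : zev z (X i) = z i := by
  simp [zev]

theorem ringHom_ext_zev {ι A : Type*} [CommRing A] {φ ψ : MvPolynomial ι ℤ →+* A}
    (h : ∀ i, φ (X i) = ψ (X i)) : φ = ψ :=
  MvPolynomial.ringHom_ext' (RingHom.ext_int _ _) h

theorem ringHom_zev {ι A B : Type*} [CommRing A] [CommRing B] (θ : A →+* B)
    (z : ι → A) (D : MvPolynomial ι ℤ) : θ (zev z D) = zev (fun i => θ (z i)) D := by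
  have : θ.comp (zev z) = zev (fun i => θ (z i)) := ringHom_ext_zev (by simp)
  exact congrArg (fun φ => φ D) this

/-- the polynomial self-map of affine space over any ring -/
noncomputable def pm {ι A : Type*} [CommRing A] (f : ι → MvPolynomial ι ℤ) (z : ι → A) : ι → A :=
  fun i => zev z (f i)

theorem pm_map {ι A B : Type*} [CommRing A] [CommRing B] (f : ι → MvPolynomial ι ℤ) (θ : A →+* B)
    (z : ι → A) : (fun i => θ (pm f z i)) = pm f (fun i => θ (z i)) := by
  ext i
  exact ringHom_zev θ z (f i)

theorem pm_iter_map {ι A B : Type*} [CommRing A] [CommRing B] (f : ι → MvPolynomial ι ℤ)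
    (θ : A →+* B) (z : ι → A) (n : ℕ) :
    (fun i => θ ((pm f)^[n] z i)) = (pm f)^[n] (fun i => θ (z i)) := by
  induction n with
  | zero => rfl
  | succ n ih => rw [Function.iterate_succ_apply', Function.iterate_succ_apply', pm_map, ih]

theorem aeval_sub_mem {ι R A : Type*} [CommRing R] [CommRing A] [Algebra R A] (J : Ideal A)
    (u v : ι → A) (h : ∀ i, u i - v i ∈ J) (D : MvPolynomial ι R) : aeval u D - aeval v D ∈ J := by
  rw [← Ideal.Quotient.mk_eq_mk_iff_sub_mem]
  have : ∀ u : ι → A, Ideal.Quotient.mk J (aeval u D) = aeval (fun i => Ideal.Quotient.mk J (u i)) D := by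
    intro u
    rw [← Ideal.Quotient.mkₐ_eq_mk R, ← AlgHom.comp_apply, comp_aeval]
  rw [this, this]
  congr 2
  ext i
  exact (Ideal.Quotient.mk_eq_mk_iff_sub_mem _ _).2 (h i)

theorem zev_sub_mem {ι A : Type*} [CommRing A] (J : Ideal A)
    (u v : ι → A) (h : ∀ i, u i - v i ∈ J) (D : MvPolynomial ι ℤ) : zev u D - zev v D ∈ J := by
  rw [← Ideal.Quotient.mk_eq_mk_iff_sub_mem, ringHom_zev, ringHom_zev]
  congr 2
  ext i
  exact (Ideal.Quotient.mk_eq_mk_iff_sub_mem _ _).2 (h i)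

theorem zev_pow_char {ι A : Type*} [CommRing A] (p : ℕ) [Fact p.Prime] [CharP A p] (s : ℕ)
    (z : ι → A) (D : MvPolynomial ι ℤ) : (zev z D) ^ p ^ s = zev (fun i => z i ^ p ^ s) D := by
  have := ringHom_zev (iterateFrobenius A p s) z D
  simpa only [iterateFrobenius_def] using this

theorem kronecker_ne_zero {F : Type*} [Field F] {n : ℕ} (P : MvPolynomial (Fin n) F) (hP : P ≠ 0)
    (Q : ℕ) (hQ : P.totalDegree < Q) (hQ1 : 1 < Q) :
    aeval (fun j : Fin n => (Polynomial.X ^ Q ^ (j : ℕ) : Polynomial F)) P ≠ 0 := by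
  obtain ⟨v, hv⟩ := support_nonempty.2 hP
  intro h0
  have hlt : ∀ w ∈ P.support, ∀ i, w i < Q := by
    intro w hw i
    have h2 := le_totalDegree hw
    have h6 : w.degree = w.sum fun _ e => e := rfl
    have := Finsupp.le_degree i w
    omega
  have hc := congrArg (Polynomial.coeff · (∑ j, v j * Q ^ (j : ℕ))) h0
  simp only [Polynomial.coeff_zero] at hc
  rw [aeval_def, eval₂_eq', Polynomial.finsetSum_coeff, Finset.sum_eq_single v] at hc
  · have : ∏ i : Fin n, ((Polynomial.X ^ Q ^ (i : ℕ) : Polynomial F)) ^ v i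
        = Polynomial.X ^ (∑ j, v j * Q ^ (j : ℕ)) := by
      rw [← Finset.prod_pow_eq_pow_sum]
      refine Finset.prod_congr rfl fun i _ => ?_
      rw [← pow_mul, mul_comm]
    rw [this] at hc
    simp at hc
    exact (mem_support_iff.1 hv) hc
  · intro w hw hne
    have : ∏ i : Fin n, ((Polynomial.X ^ Q ^ (i : ℕ) : Polynomial F)) ^ w i
        = Polynomial.X ^ (∑ j, w j * Q ^ (j : ℕ)) := by
      rw [← Finset.prod_pow_eq_pow_sum]
      refine Finset.prod_congr rfl fun i _ => ?_
      rw [← pow_mul, mul_comm]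
    rw [this, Polynomial.algebraMap_eq, Polynomial.coeff_C_mul, Polynomial.coeff_X_pow, if_neg, mul_zero]
    intro heq
    apply hne
    have h3 : ∀ u : Fin n →₀ ℕ, Nat.ofDigits Q (List.ofFn u) = ∑ j, u j * Q ^ (j : ℕ) := by
      intro u
      rw [Nat.ofDigits_eq_sum_mapIdx, List.mapIdx_eq_ofFn, List.sum_ofFn]
      exact Fintype.sum_equiv (finCongr (by simp)) _ _ (by simp [finCongr, Fin.cast])
    rw [← h3, ← h3] at heq
    have := Nat.ofDigits_inj_of_len_eq hQ1 (by simp) (by simpa [List.mem_ofFn] using hlt v hv)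
      (by simpa [List.mem_ofFn] using hlt w hw) heq
    ext i
    exact (congrFun (List.ofFn_injective this) i).symm
  · intro h; exact absurd hv h

theorem not_algInd {ι F : Type*} [Fintype ι] [Field F] (y : Fin (Fintype.card ι + 1) → MvPolynomial ι F) :
    ∃ P : MvPolynomial (Fin (Fintype.card ι + 1)) F, P ≠ 0 ∧ aeval y P = 0 := by
  by_contra h
  push Not at h
  have hy : AlgebraicIndependent F y := by
    rw [algebraicIndependent_iff]
    intro P hP
    by_contra h0
    exact h P h0 hP
  have := hy.lift_cardinalMk_le_trdeg
  rw [MvPolynomial.trdeg_of_isDomain] at this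
  simp at this

theorem quasi_fixed {ι : Type*} [Fintype ι] (p : ℕ) [hp : Fact p.Prime]
    (f : ι → MvPolynomial ι ℤ) (D : MvPolynomial ι ℤ)
    (hD : zev ((pm f)^[Fintype.card ι] (X : ι → MvPolynomial ι (AlgebraicClosure (ZMod p)))) D ≠ 0) :
    ∃ (r : ℕ) (a : ι → AlgebraicClosure (ZMod p)),
      pm f a = (fun i => a i ^ p ^ r) ∧ zev a D ≠ 0 := by
  classical
  set n := Fintype.card ι
  set k := AlgebraicClosure (ZMod p)
  set A := MvPolynomial ι k
  set x : ι → A := X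
  -- algebraic relations
  have hP : ∀ i, ∃ P : MvPolynomial (Fin (n + 1)) k, P ≠ 0 ∧
      aeval (fun j : Fin (n + 1) => (pm f)^[j] x i) P = 0 := fun i => not_algInd _
  choose P hP0 hP using hP
  -- constants
  obtain ⟨κ, hκ⟩ : ∃ κ : ℕ, ∀ i, (P i).totalDegree ≤ p ^ κ := by
    refine ⟨∑ i, (P i).totalDegree, fun i => ?_⟩
    exact (Finset.single_le_sum (f := fun i => (P i).totalDegree) (fun _ _ => Nat.zero_le _)
      (Finset.mem_univ i)).trans (Nat.lt_pow_self hp.out.one_lt).le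
  set z : A := (zev ((pm f)^[n] x) D) ^ p ^ κ with hz
  obtain ⟨r, hr1, hrz, hrf, hrP⟩ : ∃ r : ℕ, 1 < p ^ r ∧ z.totalDegree < p ^ r ∧
      (∀ i, (pm f x i).totalDegree < p ^ r) ∧ (∀ i, (P i).totalDegree < p ^ r) := by
    refine ⟨1 + z.totalDegree + ∑ i, (pm f x i).totalDegree + ∑ i, (P i).totalDegree, ?_⟩
    have h1 := Nat.lt_pow_self hp.out.one_lt
      (n := 1 + z.totalDegree + ∑ i, (pm f x i).totalDegree + ∑ i, (P i).totalDegree)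
    refine ⟨by omega, by omega, fun i => ?_, fun i => ?_⟩
    · have := (Finset.single_le_sum (f := fun i => (pm f x i).totalDegree) (fun _ _ => Nat.zero_le _)
        (Finset.mem_univ i))
      omega
    · have := (Finset.single_le_sum (f := fun i => (P i).totalDegree) (fun _ _ => Nat.zero_le _)
        (Finset.mem_univ i))
      omega
  by_contra hcon
  push Not at hcon
  set I : Ideal A := Ideal.span (Set.range fun i => (X i ^ (p ^ r) - pm f x i : A)) with hI
  have hgen : ∀ i, x i ^ p ^ r - pm f x i ∈ I := fun i => Ideal.subset_span ⟨i, rfl⟩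
  have hiter : ∀ j i, x i ^ (p ^ r) ^ j - (pm f)^[j] x i ∈ I := by
    intro j
    induction j with
    | zero => intro i; simp
    | succ j ih =>
      intro i
      have h1 := zev_sub_mem I _ _ ih (f i)
      have h2 : (zev (fun i => x i ^ (p ^ r) ^ j)) (f i) = (pm f x i) ^ (p ^ r) ^ j := by
        simp only [← pow_mul, pm, zev_pow_char]
      have h3 : x i ^ (p ^ r) ^ (j + 1) - (pm f x i) ^ (p ^ r) ^ j ∈ I := by
        rw [pow_succ', pow_mul]
        exact Ideal.mem_of_dvd _ (sub_dvd_pow_sub_pow _ _ _) (hgen i)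
      rw [h2] at h1
      rw [Function.iterate_succ_apply']
      have := I.add_mem h3 h1
      rwa [sub_add_sub_cancel] at this
  have hzI : z ∈ I := by
    by_contra hzI
    set J : Ideal A := I.colon {z} with hJ
    have hJtop : J ≠ ⊤ := by
      intro h
      apply hzI
      have : (1 : A) ∈ J := by rw [h]; trivial
      rw [hJ, Submodule.mem_colon_singleton] at this
      simpa using this
    obtain ⟨𝔪, h𝔪, hJ𝔪⟩ := Ideal.exists_le_maximal J hJtop
    obtain ⟨a, rfl⟩ := eq_vanishingIdeal_singleton_of_isMaximal k h𝔪
    have hIa : ∀ g ∈ I, aeval a g = 0 := by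
      intro g hg
      rw [← mem_vanishingIdeal_singleton_iff]
      apply hJ𝔪
      rw [hJ, Submodule.mem_colon_singleton]
      exact I.mul_mem_right _ hg
    have hev : ∀ D : MvPolynomial ι ℤ, aeval a (zev x D : A) = zev a D := by
      intro D
      have := ringHom_zev (aeval a : A →ₐ[k] k).toRingHom x D
      simp only [x, AlgHom.toRingHom_eq_coe, RingHom.coe_coe, aeval_X] at this
      exact this
    have hfix : pm f a = fun i => a i ^ p ^ r := by
      ext i
      have h1 := hIa _ (hgen i)
      rw [map_sub, pm, hev, sub_eq_zero] at h1
      rw [pm, ← h1]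
      simp [x]
    have hDa := hcon r a hfix
    -- the univariate polynomials
    set M := (p ^ r) ^ n * p ^ κ with hM
    have hs : ∀ i, ∃ s : Polynomial k, s.eval (a i) ≠ 0 ∧
        Polynomial.aeval (x i) s * (x i - C (a i)) ^ M ∈ I := by
      intro i
      set q : Polynomial k := aeval (fun j : Fin (n + 1) => (Polynomial.X ^ (p ^ r) ^ (j : ℕ))) (P i)
      have hq0 : q ≠ 0 := kronecker_ne_zero (P i) (hP0 i) (p ^ r) (hrP i) hr1
      have hqd : q.natDegree ≤ M := by
        have := aeval_natDegree_le (P i) (hκ i)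
          (fun j : Fin (n + 1) => (Polynomial.X ^ (p ^ r) ^ (j : ℕ) : Polynomial k)) (n := (p ^ r) ^ n)
          (by
            intro j
            rw [Polynomial.natDegree_X_pow]
            exact Nat.pow_le_pow_right (by omega) (by omega))
        rw [mul_comm] at this
        exact this
      have hqI : Polynomial.aeval (x i) q ∈ I := by
        have h1 : Polynomial.aeval (x i) q =
            aeval (fun j : Fin (n + 1) => x i ^ (p ^ r) ^ (j : ℕ)) (P i) := by
          rw [← AlgHom.comp_apply, comp_aeval]
          simp
        have h2 := aeval_sub_mem I _ _ (fun j : Fin (n + 1) => hiter j i) (P i)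
        rw [hP i, sub_zero] at h2
        rw [h1]; exact h2
      obtain ⟨s, hs1, hs2⟩ := Polynomial.exists_eq_pow_rootMultiplicity_mul_and_not_dvd q hq0 (a i)
      refine ⟨s, fun h => hs2 (Polynomial.dvd_iff_isRoot.2 h), ?_⟩
      have hle : q.rootMultiplicity (a i) ≤ M := by
        have h1 := Polynomial.natDegree_le_of_dvd (Polynomial.pow_rootMultiplicity_dvd q (a i)) hq0
        rw [Polynomial.natDegree_pow, Polynomial.natDegree_X_sub_C, mul_one] at h1
        exact h1.trans hqd
      rw [hs1, map_mul, map_pow] at hqI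
      simp only [map_sub, Polynomial.aeval_X, Polynomial.aeval_C] at hqI
      rw [← Nat.sub_add_cancel hle, pow_add]
      have := I.mul_mem_left ((x i - C (a i)) ^ (M - q.rootMultiplicity (a i))) hqI
      convert this using 1
      rw [algebraMap_eq]
      ring
    choose s hs1 hs2 using hs
    set σ : A := ∏ i, Polynomial.aeval (x i) (s i) with hσ
    have hσa : aeval a σ ≠ 0 := by
      rw [hσ, map_prod, Finset.prod_ne_zero_iff]
      intro i _
      have : aeval a (Polynomial.aeval (x i) (s i)) = (s i).eval (a i) := by
        rw [← Polynomial.aeval_algHom_apply]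
        simp [x]
      rw [this]; exact hs1 i
    apply hσa
    rw [← mem_vanishingIdeal_singleton_iff]
    apply hJ𝔪
    rw [hJ, Submodule.mem_colon_singleton, smul_eq_mul]
    -- z is congruent to D(x)^M
    have hz1 : zev (fun i => x i ^ M) D - z ∈ I := by
      have h1 := zev_sub_mem I _ _ (hiter n) D
      have h2 := Ideal.mem_of_dvd _ (sub_dvd_pow_sub_pow _ _ (p ^ κ)) h1
      rw [← hz, zev_pow_char] at h2
      simpa only [← pow_mul, hM] using h2
    have hM' : M = p ^ (r * n + κ) := by rw [hM, pow_add, pow_mul]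
    have hz2 : zev (fun i => x i ^ M) D ∈ Ideal.span (Set.range fun i => (x i - C (a i)) ^ M) := by
      have h1 := zev_sub_mem (Ideal.span (Set.range fun i => (x i - C (a i)) ^ M))
        (fun i => x i ^ M) (fun i => (C (a i)) ^ M) (by
          intro i
          refine Ideal.subset_span ⟨i, ?_⟩
          beta_reduce; rw [hM', sub_pow_char_pow]) D
      have h2 : zev (fun i => (C (a i) : A) ^ M) D = 0 := by
        rw [hM', ← zev_pow_char p, ← ringHom_zev (C : k →+* A) a D, hDa]
        simp [hp.out.ne_zero]
      rwa [h2, sub_zero] at h1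
    have hz3 : σ * zev (fun i => x i ^ M) D ∈ I := by
      have h1 : Ideal.span (Set.range fun i => (x i - C (a i)) ^ M) ≤ I.colon {σ} := by
        rw [Ideal.span_le]
        rintro _ ⟨i, rfl⟩
        rw [SetLike.mem_coe, Submodule.mem_colon_singleton, smul_eq_mul, hσ,
          ← Finset.mul_prod_erase _ _ (Finset.mem_univ i)]
        have := I.mul_mem_right (∏ x_1 ∈ Finset.univ.erase i, (Polynomial.aeval (x x_1)) (s x_1)) (hs2 i)
        convert this using 1
        ring
      have h2 := h1 hz2
      rw [Submodule.mem_colon_singleton, smul_eq_mul, mul_comm] at h2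
      exact h2
    have := I.sub_mem hz3 (I.mul_mem_left σ hz1)
    convert this using 1
    ring
  have := eq_zero_of_mem_span (fun i => pm f x i) (p ^ r) z hrz hrf hzI
  rw [hz] at this
  exact hD (pow_eq_zero_iff (pow_ne_zero _ hp.out.ne_zero) |>.1 this)

theorem pderiv_zev {ι κ : Type*} [Fintype ι] (u : ι → MvPolynomial κ ℤ) (D : MvPolynomial ι ℤ) (j : κ) :
    pderiv j (zev u D) = ∑ l, zev u (pderiv l D) * pderiv j (u l) := by
  classical
  induction D using MvPolynomial.induction_on with
  | C a =>
    simp [zev]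
  | add p q hp hq => simp only [map_add, hp, hq, add_mul, Finset.sum_add_distrib]
  | mul_X p i hp =>
    simp only [map_mul, Derivation.leibniz, smul_eq_mul, hp, map_add, add_mul, Finset.sum_add_distrib,
      zev_X, pderiv_X, Finset.mul_sum]
    congr 1
    · rw [Finset.sum_eq_single i]
      · simp
      · intro b _ hb; simp [Pi.single_apply, hb.symm]
      · simp
    · exact Finset.sum_congr rfl fun _ _ => by ring

theorem zev_taylor {ι A : Type*} [Fintype ι] [CommRing A] (ε : A) (y w : ι → A) (D : MvPolynomial ι ℤ) :
    zev (fun i => y i + ε * w i) D - (zev y D + ε * ∑ l, zev y (pderiv l D) * w l)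
      ∈ Ideal.span {ε ^ 2} := by
  classical
  induction D using MvPolynomial.induction_on with
  | C a => simp [zev]
  | add p q hp hq => 
    have := Ideal.add_mem _ hp hq
    convert this using 1
    simp only [map_add, add_mul, Finset.sum_add_distrib]
    ring
  | mul_X p i hp =>
    rw [Ideal.mem_span_singleton] at hp ⊢
    obtain ⟨c, hc⟩ := hp
    have hsum : ∑ l, zev y (pderiv l (p * X i)) * w l =
        zev y p * w i + y i * ∑ l, zev y (pderiv l p) * w l := by
      simp only [Derivation.leibniz, smul_eq_mul, map_add, map_mul, zev_X, add_mul,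
        Finset.sum_add_distrib, Finset.mul_sum, pderiv_X]
      congr 1
      · rw [Finset.sum_eq_single i]
        · simp
        · intro b _ hb; simp [Pi.single_apply, hb.symm]
        · simp
      · exact Finset.sum_congr rfl fun _ _ => by ring
    rw [hsum, map_mul, map_mul, zev_X, zev_X]
    refine ⟨c * (y i + ε * w i) + (∑ l, zev y (pderiv l p) * w l) * w i, ?_⟩
    linear_combination (y i + ε * w i) * hc

section Jac
variable {ι : Type*} [Fintype ι] [DecidableEq ι] (f : ι → MvPolynomial ι ℤ)
variable {A B : Type*} [CommRing A] [CommRing B]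

noncomputable def jacAt (z : ι → A) : Matrix ι ι A := Matrix.of fun i j => zev z (pderiv j (f i))

/-- Jacobian matrix of the `n`-th iterate at `z`. -/
noncomputable def jacIt : ℕ → (ι → A) → Matrix ι ι A
  | 0, _ => 1
  | n + 1, z => jacAt f ((pm f)^[n] z) * jacIt n z

theorem jacAt_map (θ : A →+* B) (z : ι → A) : (jacAt f z).map θ = jacAt f (fun i => θ (z i)) := by
  ext i j
  simp [jacAt, ringHom_zev]

theorem jacIt_map (θ : A →+* B) (n : ℕ) (z : ι → A) :
    (jacIt f n z).map θ = jacIt f n (fun i => θ (z i)) := by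
  induction n with
  | zero => simp [jacIt, Matrix.map_one]
  | succ n ih => rw [jacIt, jacIt, Matrix.map_mul, ih, jacAt_map, pm_iter_map]

theorem jacIt_add (n m : ℕ) (z : ι → A) :
    jacIt f (n + m) z = jacIt f n ((pm f)^[m] z) * jacIt f m z := by
  induction n with
  | zero => simp [jacIt]
  | succ n ih => rw [add_right_comm, jacIt, ih, jacIt, Matrix.mul_assoc, Function.iterate_add_apply]

theorem jacIt_X (n : ℕ) (i j : ι) : 
    jacIt f n (X : ι → MvPolynomial ι ℤ) i j = pderiv j ((pm f)^[n] X i) := by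
  induction n generalizing i j with
  | zero => 
    simp only [jacIt, Function.iterate_zero, id, pderiv_X, Matrix.one_apply, Pi.single_apply]
  | succ n ih => 
    rw [jacIt, Matrix.mul_apply, Function.iterate_succ_apply']
    conv_rhs => rw [pm, pderiv_zev]
    simp only [ih]
    rfl

theorem pm_iter_taylor (ε : A) (n : ℕ) (y w : ι → A) (i : ι) :
    (pm f)^[n] (fun i => y i + ε * w i) i - ((pm f)^[n] y i + ε * (jacIt f n y).mulVec w i)
      ∈ Ideal.span {ε ^ 2} := by
  induction n generalizing i with
  | zero => simp [jacIt]
  | succ n ih =>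
    rw [Function.iterate_succ_apply', Function.iterate_succ_apply', jacIt, ← Matrix.mulVec_mulVec]
    have h1 := zev_sub_mem _ _ _ ih (f i)
    have h2 := zev_taylor ε ((pm f)^[n] y) ((jacIt f n y).mulVec w) (f i)
    have := Ideal.add_mem _ h1 h2
    convert this using 1
    simp [pm, jacAt, Matrix.mulVec, dotProduct]

theorem jacIt_congr_of_fix (n : ℕ) (z : ι → A) (h : (pm f)^[n] z = z) (k : ℕ) :
    jacIt f (n * k) z = jacIt f n z ^ k := by
  induction k with
  | zero => simp [jacIt]
  | succ k ih =>
    have : (pm f)^[n * k] z = z := by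
      rw [Function.iterate_mul]; exact Function.iterate_fixed h k
    rw [mul_add, mul_one, add_comm, jacIt_add, ih, this, pow_succ']
end Jac

section Criterion
variable {ι : Type*} 

theorem derivation_zero {R A K : Type*} [CommRing R] [CommRing A] [IsDomain A] [CharZero A] [Field K] [Algebra A K]
    [Algebra R A] [Module R K]
    [FaithfulSMul A K] (δ : Derivation R A K) (S : Subalgebra R A) (halg : Algebra.IsAlgebraic S A)
    (h : ∀ s ∈ S, δ s = 0) : δ = 0 := by
  ext g
  have hq : ∀ q : Polynomial S, δ (Polynomial.aeval g q) = algebraMap A K (Polynomial.aeval g (Polynomial.derivative q)) * δ g := by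
    intro q
    induction q using Polynomial.induction_on' with
    | add p q hp hq => simp only [map_add, hp, hq, add_mul]
    | monomial n a =>
      rw [Polynomial.aeval_monomial, Polynomial.derivative_monomial, Polynomial.aeval_monomial,
        Derivation.leibniz, Derivation.leibniz_pow]
      have : δ (algebraMap S A a) = 0 := h _ a.2
      rw [this]
      simp only [nsmul_eq_mul, Algebra.smul_def (R := A), map_mul, map_pow, map_natCast]
      rw [mul_zero, add_zero]
      ring
  by_contra hg
  obtain ⟨q0, hq0, hq0'⟩ := Algebra.IsAlgebraic.isAlgebraic (R := S) g
  have hex : ∃ n : ℕ, ∃ q : Polynomial S, q ≠ 0 ∧ Polynomial.aeval g q = 0 ∧ q.natDegree = n :=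
    ⟨_, q0, hq0, hq0', rfl⟩
  classical
  obtain ⟨q, hq1, hq2, hq3⟩ := Nat.find_spec hex
  have hmin := fun m => Nat.find_min hex (m := m)
  have h1 := hq q
  rw [hq2, map_zero] at h1
  have h2 : Polynomial.aeval g (Polynomial.derivative q) = 0 := by
    rcases mul_eq_zero.1 h1.symm with h | h
    · exact (FaithfulSMul.algebraMap_injective A K) (by rw [h, map_zero])
    · exact absurd h hg
  have hdeg : q.natDegree ≠ 0 := by
    intro h0
    rw [Polynomial.eq_C_of_natDegree_eq_zero h0, Polynomial.aeval_C] at hq2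
    have : q.coeff 0 = 0 := by
      apply Subtype.ext
      exact hq2
    apply hq1
    rw [Polynomial.eq_C_of_natDegree_eq_zero h0, this, map_zero]
  have : CharZero S := ⟨fun a b hab => by
    have := congrArg (algebraMap S A) hab
    simpa using this⟩
  have h3 : Polynomial.derivative q ≠ 0 := by
    intro h
    exact hdeg (Polynomial.derivative_eq_zero.1 h)
  exact hmin _ (by rw [← hq3]; exact Polynomial.natDegree_derivative_lt hdeg) ⟨_, h3, h2, rfl⟩

theorem jac_criterion [Fintype ι] (K : Type*) [Field K] [Algebra (MvPolynomial ι ℤ) K]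
    [FaithfulSMul (MvPolynomial ι ℤ) K] {r : ℕ} (y : Fin r → MvPolynomial ι ℤ)
    (hy : AlgebraicIndependent ℤ y) :
    LinearIndependent K (fun a : Fin r => fun j : ι =>
      algebraMap (MvPolynomial ι ℤ) K (pderiv j (y a))) := by
  classical
  have hinj : Function.Injective y := hy.injective
  obtain ⟨u, hu, hub⟩ := exists_isTranscendenceBasis_superset hy.coe_range
  have hcard := hub.lift_cardinalMk_eq_trdeg
  rw [MvPolynomial.trdeg_of_isDomain] at hcard
  have hfin : Finite u := by
    rw [← Cardinal.mk_lt_aleph0_iff, ← Cardinal.lift_lt_aleph0, hcard]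
    simp
  have : Fintype u := Fintype.ofFinite u
  have hc : Fintype.card u = Fintype.card ι := by
    simpa using hcard
  obtain ⟨e⟩ := Fintype.card_eq.1 hc
  set M : Matrix ι ι K := Matrix.of fun i j => algebraMap (MvPolynomial ι ℤ) K (pderiv j (e.symm i : MvPolynomial ι ℤ)) with hM
  have hker : ∀ v, M.mulVec v = 0 → v = 0 := by
    intro v hv
    set δ : Derivation ℤ (MvPolynomial ι ℤ) K := mkDerivation ℤ v with hδ
    have hδ' : ∀ g, δ g = ∑ j, algebraMap (MvPolynomial ι ℤ) K (pderiv j g) * v j := by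
      intro g
      induction g using MvPolynomial.induction_on with
      | C a => simp [hδ]
      | add p q hp hq => simp only [map_add, hp, hq, add_mul, Finset.sum_add_distrib]
      | mul_X p i hp =>
        rw [Derivation.leibniz, hp, hδ, mkDerivation_X]
        simp only [Derivation.leibniz, smul_eq_mul, map_add, map_mul, add_mul, pderiv_X,
          Finset.sum_add_distrib, Algebra.smul_def, Finset.mul_sum]
        congr 1
        · rw [Finset.sum_eq_single i]
          · simp
          · intro b _ hb; simp [hb.symm]
          · simp
        · exact Finset.sum_congr rfl fun _ _ => by ring
    have hz : δ = 0 := by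
      refine derivation_zero δ (Algebra.adjoin ℤ (Set.range ((↑) : u → MvPolynomial ι ℤ))) hub.isAlgebraic ?_
      intro s hs
      induction hs using Algebra.adjoin_induction with
      | mem x hx =>
        obtain ⟨x, rfl⟩ := hx
        rw [hδ']
        have := congrFun hv (e x)
        simpa [hM, Matrix.mulVec, dotProduct] using this
      | algebraMap r => simp
      | add x y _ _ hx hy => rw [map_add, hx, hy, add_zero]
      | mul x y _ _ hx hy => rw [Derivation.leibniz, hx, hy, smul_zero, smul_zero, add_zero]
    ext j
    have : δ (X j) = 0 := by rw [hz]; rfl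
    rwa [hδ, mkDerivation_X] at this
  have hrows : LinearIndependent K M.row := by
    rw [Matrix.linearIndependent_rows_iff_isUnit, ← Matrix.mulVec_injective_iff_isUnit]
    exact (injective_iff_map_eq_zero M.mulVecLin).2 hker
  have := hrows.comp (fun a : Fin r => e ⟨y a, hu ⟨a, rfl⟩⟩) (by
    intro a b hab
    have := congrArg Subtype.val (e.injective hab)
    exact hinj this)
  convert this using 1
  ext a j
  simp [hM, Matrix.row, Function.comp]
end Criterion

theorem exists_rows_of_le_rank {K m n : Type*} [Field K] [Fintype m] [Fintype n] 
    (M : Matrix m n K) {d : ℕ} (h : d ≤ M.rank) : 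
    ∃ r : Fin d → m, LinearIndependent K (M.submatrix r id).row := by
  obtain ⟨κ, a, ha, hs, hl⟩ := exists_linearIndependent' K M.row
  have : Finite κ := Finite.of_injective a ha
  have : Fintype κ := Fintype.ofFinite κ
  have hc : Fintype.card κ = M.rank := by
    rw [Matrix.rank_eq_finrank_span_row, ← hs, finrank_span_eq_card hl]
  rw [← hc] at h
  obtain ⟨e⟩ : Nonempty (Fin d ↪ κ) := by
    rw [Function.Embedding.nonempty_iff_card_le]; simpa using h
  refine ⟨a ∘ e, ?_⟩
  have := hl.comp e e.injective
  exact this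

theorem le_rank_iff {K m n : Type*} [Field K] [Fintype m] [Fintype n] 
    (M : Matrix m n K) {d : ℕ} : 
    d ≤ M.rank ↔ ∃ (r : Fin d → m) (c : Fin d → n), (M.submatrix r c).det ≠ 0 := by
  constructor
  · intro h
    obtain ⟨r, hr⟩ := exists_rows_of_le_rank M h
    have h1 : d ≤ ((M.submatrix r id).transpose).rank := by
      rw [Matrix.rank_transpose, hr.rank_matrix]; simp
    obtain ⟨c, hc⟩ := exists_rows_of_le_rank _ h1
    refine ⟨r, c, ?_⟩
    rw [Matrix.linearIndependent_rows_iff_isUnit, Matrix.isUnit_iff_isUnit_det] at hc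
    have h2 := hc.ne_zero
    rw [← Matrix.det_transpose] at h2
    exact h2
  · rintro ⟨r, c, h⟩
    have := Matrix.rank_of_det_ne_zero h
    rw [Fintype.card_fin] at this
    rw [← this]
    exact Matrix.rank_submatrix_le _ _ _

theorem dependence {ι : Type*} [Fintype ι] [DecidableEq ι] (f : ι → MvPolynomial ι ℤ)
    (K : Type*) [Field K] [Algebra (MvPolynomial ι ℤ) K]
    [FaithfulSMul (MvPolynomial ι ℤ) K] (n d : ℕ)
    (hd : ((jacIt f n (X : ι → MvPolynomial ι ℤ)).map (algebraMap (MvPolynomial ι ℤ) K)).rank ≤ d)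
    (g : MvPolynomial ι ℤ) (hg : zev ((pm f)^[n] (X : ι → MvPolynomial ι ℤ)) g ≠ 0) (s : Fin d → ι) :
    ∃ (h : MvPolynomial (Fin d) ℤ) (q : MvPolynomial ι ℤ), h ≠ 0 ∧
      zev (fun j => (pm f)^[n] (X : ι → MvPolynomial ι ℤ) (s j)) h = 
        zev ((pm f)^[n] (X : ι → MvPolynomial ι ℤ)) g * q := by
  classical
  set G := zev ((pm f)^[n] (X : ι → MvPolynomial ι ℤ)) g with hG
  set U : Fin d → MvPolynomial ι ℤ := fun j => (pm f)^[n] (X : ι → MvPolynomial ι ℤ) (s j) with hU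
  set M := ((jacIt f n (X : ι → MvPolynomial ι ℤ)).map (algebraMap (MvPolynomial ι ℤ) K)) with hM
  let gs : Fin (d+1) → MvPolynomial ι ℤ := Fin.cons g (fun j => X (s j))
  let y : Fin (d+1) → MvPolynomial ι ℤ := fun a => zev ((pm f)^[n] (X : ι → MvPolynomial ι ℤ)) (gs a)
  have hy0 : y 0 = G := rfl
  have hys : ∀ j, y (Fin.succ j) = U j := by intro j; simp [y, gs, hU]
  have hnot : ¬ AlgebraicIndependent ℤ y := by
    intro hy
    have h1 := jac_criterion K y hy
    have h2 : ∀ a, (fun j : ι => algebraMap (MvPolynomial ι ℤ) K (pderiv j (y a))) ∈ Submodule.span K (Set.range M.row) := by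
      intro a
      have : (fun j : ι => algebraMap (MvPolynomial ι ℤ) K (pderiv j (y a))) = 
        ∑ l, algebraMap (MvPolynomial ι ℤ) K (zev ((pm f)^[n] (X : ι → MvPolynomial ι ℤ)) (pderiv l (gs a))) • M.row l := by
        ext j
        simp only [y, pderiv_zev, map_sum, map_mul, Finset.sum_apply, Pi.smul_apply, smul_eq_mul, hM,
          Matrix.row, Matrix.map_apply, jacIt_X]
      rw [this]
      exact Submodule.sum_mem _ fun l _ => Submodule.smul_mem _ _ (Submodule.subset_span ⟨l, rfl⟩)
    rw [Matrix.rank_eq_finrank_span_row] at hd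
    have h3 : LinearIndependent K (fun a => (⟨_, h2 a⟩ : Submodule.span K (Set.range M.row))) := by
      apply LinearIndependent.of_comp (Submodule.subtype _)
      exact h1
    have := h3.fintype_card_le_finrank
    rw [Fintype.card_fin] at this
    omega
  rw [algebraicIndependent_iff] at hnot
  push Not at hnot
  obtain ⟨P, hP, hP0⟩ := hnot
  set P1 := finSuccEquiv ℤ d P with hP1
  have hP1ne : P1 ≠ 0 := by
    rw [hP1]; simpa using hP0
  have hev : ∀ R : MvPolynomial (Fin (d+1)) ℤ, aeval y R = Polynomial.eval₂ (zev U) G (finSuccEquiv ℤ d R) := by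
    intro R
    have : ((aeval y : MvPolynomial (Fin (d+1)) ℤ →ₐ[ℤ] _) : MvPolynomial (Fin (d+1)) ℤ →+* MvPolynomial ι ℤ) = 
      (Polynomial.eval₂RingHom (zev U) G).comp ((finSuccEquiv ℤ d : MvPolynomial (Fin (d+1)) ℤ →+* _)) := by
      apply ringHom_ext_zev
      intro i
      refine Fin.cases ?_ (fun j => ?_) i
      · simp [hy0, finSuccEquiv_X_zero]
      · simp [hys, finSuccEquiv_X_succ]
    exact congrArg (fun φ => φ R) this
  rw [hev] at hP
  obtain ⟨P2, hP2, hP2'⟩ := Polynomial.exists_eq_pow_rootMultiplicity_mul_and_not_dvd P1 hP1ne 0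
  rw [← hP1, hP2, Polynomial.eval₂_mul] at hP
  have hG2 : Polynomial.eval₂ (zev U) G P2 = 0 := by
    refine (mul_eq_zero.1 hP).resolve_left ?_
    simp [hg]
  refine ⟨P2.coeff 0, -Polynomial.eval₂ (zev U) G P2.divX, ?_, ?_⟩
  · intro h
    apply hP2'
    rw [map_zero, sub_zero]
    exact Polynomial.X_dvd_iff.2 h
  · have := Polynomial.divX_mul_X_add P2
    rw [← this, Polynomial.eval₂_add, Polynomial.eval₂_mul, Polynomial.eval₂_X, Polynomial.eval₂_C] at hG2
    linear_combination hG2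

theorem rank_mul_mul {K n : Type*} [Field K] [Fintype n] [DecidableEq n] (A B C : Matrix n n K) (d : ℕ)
    (h1 : d ≤ (B * C).rank) (h2 : B.rank ≤ d) (h3 : d ≤ (A * B).rank) : d ≤ (A * (B * C)).rank := by
  have hle : LinearMap.range (B * C).mulVecLin ≤ LinearMap.range B.mulVecLin := by
    rw [Matrix.mulVecLin_mul]; exact LinearMap.range_comp_le_range _ _
  have heq : LinearMap.range (B * C).mulVecLin = LinearMap.range B.mulVecLin := by
    apply Submodule.eq_of_le_of_finrank_le hle
    exact h2.trans h1
  have : (A * (B * C)).rank = (A * B).rank := by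
    unfold Matrix.rank
    rw [Matrix.mulVecLin_mul A (B * C), LinearMap.range_comp, heq, ← LinearMap.range_comp,
      ← Matrix.mulVecLin_mul]
  rw [this]; exact h3

theorem rank_orbit {ι K : Type*} [Field K] [Fintype ι] [DecidableEq ι] (f : ι → MvPolynomial ι ℤ)
    (n0 d : ℕ) (hle : ∀ z : ι → K, (jacIt f n0 z).rank ≤ d) (b : ι → K) 
    (hb : ∀ i, d ≤ (jacIt f (n0 + 1) ((pm f)^[i] b)).rank) (n : ℕ) : d ≤ (jacIt f n b).rank := by
  have key : ∀ l, d ≤ (jacIt f (n0 + l) b).rank := by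
    intro l
    induction l with
    | zero => 
      have := hb 0
      rw [jacIt] at this
      exact this.trans (Matrix.rank_mul_le_right _ _)
    | succ l ih =>
      rw [jacIt_add] at ih
      have h3 := hb l
      rw [jacIt] at h3
      have := rank_mul_mul _ _ _ d ih (hle _) h3
      rw [← add_assoc, jacIt, jacIt_add, Function.iterate_add_apply]
      exact this
  have := key n
  rw [jacIt_add] at this
  exact this.trans (Matrix.rank_mul_le_right _ _)

theorem zev_minor {ι A : Type*} [CommRing A] [Fintype ι] [DecidableEq ι] (f : ι → MvPolynomial ι ℤ)
    (n d : ℕ) (r c : Fin d → ι) (z : ι → A) : 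
    zev z (((jacIt f n (X : ι → MvPolynomial ι ℤ)).submatrix r c).det) = ((jacIt f n z).submatrix r c).det := by
  rw [RingHom.map_det]
  have := jacIt_map f (zev z) n X
  simp only [zev_X] at this
  congr 1
  rw [← this]
  rfl

theorem exists_pow_idem {M : Type*} [Monoid M] [Finite M] (x : M) : ∃ k, 1 ≤ k ∧ x ^ k * x ^ k = x ^ k := by
  obtain ⟨a, b, hab, h⟩ : ∃ a b, a < b ∧ x ^ a = x ^ b := by
    obtain ⟨a, b, h1, h2⟩ := Finite.exists_ne_map_eq_of_infinite (fun n : ℕ => x ^ n)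
    rcases lt_or_gt_of_ne h1 with h | h
    · exact ⟨a, b, h, h2⟩
    · exact ⟨b, a, h, h2.symm⟩
  obtain ⟨c, rfl⟩ := Nat.exists_eq_add_of_lt hab
  have h1 : ∀ n, a ≤ n → x ^ (n + (c + 1)) = x ^ n := by
    intro n hn
    obtain ⟨l, rfl⟩ := Nat.exists_eq_add_of_le hn
    rw [pow_add x a l, h, ← pow_add]; congr 1; ring
  have h2 : ∀ j n, a ≤ n → x ^ (n + (c + 1) * j) = x ^ n := by
    intro j n hn
    induction j with
    | zero => simp
    | succ j ih => rw [mul_add, mul_one, ← add_assoc, h1 _ (by omega), ih]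
  refine ⟨(a + 1) * (c + 1), by nlinarith, ?_⟩
  rw [← pow_add]
  conv_lhs => rw [mul_comm (a+1) (c+1)]
  rw [h2 _ _ (by nlinarith), mul_comm]

theorem exists_stable {ι K : Type*} [Field K] [Fintype ι] [DecidableEq ι] (f : ι → MvPolynomial ι ℤ)
    [Algebra (MvPolynomial ι ℤ) K] [FaithfulSMul (MvPolynomial ι ℤ) K] :
    ∃ n0, ∀ n, ((jacIt f n0 (X : ι → MvPolynomial ι ℤ)).map (algebraMap (MvPolynomial ι ℤ) K)).rank ≤
      ((jacIt f n (X : ι → MvPolynomial ι ℤ)).map (algebraMap (MvPolynomial ι ℤ) K)).rank := by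
  classical
  have hex : ∃ r, ∃ n, ((jacIt f n (X : ι → MvPolynomial ι ℤ)).map (algebraMap (MvPolynomial ι ℤ) K)).rank = r := 
    ⟨_, 0, rfl⟩
  obtain ⟨n0, h0⟩ := Nat.find_spec hex
  refine ⟨n0, fun n => ?_⟩
  rw [h0]
  exact Nat.find_min' hex ⟨n, rfl⟩

theorem exists_point {ι K : Type*} [Field K] [Fintype ι] [DecidableEq ι] (f : ι → MvPolynomial ι ℤ)
    [Algebra (MvPolynomial ι ℤ) K] [FaithfulSMul (MvPolynomial ι ℤ) K] (D0 : MvPolynomial ι ℤ)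
    (hD0 : zev ((pm f)^[Fintype.card ι] (X : ι → MvPolynomial ι ℤ)) D0 ≠ 0) :
    ∃ n0 d Nbd : ℕ,
      ((jacIt f n0 (X : ι → MvPolynomial ι ℤ)).map (algebraMap (MvPolynomial ι ℤ) K)).rank ≤ d ∧
      ∀ p : ℕ, p.Prime → Nbd < p → ∃ (F : Type) (_ : Field F) (_ : Finite F) (_ : CharP F p) 
        (a : ι → F) (m : ℕ), 1 ≤ m ∧ (pm f)^[m] a = a ∧ (∀ i, zev ((pm f)^[i] a) D0 ≠ 0) ∧ 
        jacIt f m a * jacIt f m a = jacIt f m a ∧ d ≤ (jacIt f m a).rank := by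
  have hinj := FaithfulSMul.algebraMap_injective (MvPolynomial ι ℤ) K
  obtain ⟨n0, hn0⟩ := exists_stable (K := K) f
  set d := ((jacIt f n0 (X : ι → MvPolynomial ι ℤ)).map (algebraMap (MvPolynomial ι ℤ) K)).rank with hd
  set N := Fintype.card ι
  have h1 : d ≤ ((jacIt f (n0 + 1) ((pm f)^[N] (X : ι → MvPolynomial ι ℤ))).map (algebraMap (MvPolynomial ι ℤ) K)).rank := by
    refine (hn0 (n0 + 1 + N)).trans ?_
    rw [jacIt_add, Matrix.map_mul]
    exact Matrix.rank_mul_le_left _ _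
  rw [le_rank_iff] at h1
  obtain ⟨r, c, hrc⟩ := h1
  have h2 : ((jacIt f (n0 + 1) ((pm f)^[N] (X : ι → MvPolynomial ι ℤ))).submatrix r c).det ≠ 0 := by
    intro h
    apply hrc
    rw [Matrix.submatrix_map]
    have := RingHom.map_det (algebraMap (MvPolynomial ι ℤ) K) ((jacIt f (n0 + 1) ((pm f)^[N] (X : ι → MvPolynomial ι ℤ))).submatrix r c)
    rw [h, map_zero] at this
    exact this.symm
  set Δ := ((jacIt f (n0 + 1) (X : ι → MvPolynomial ι ℤ)).submatrix r c).det with hΔ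
  rw [← zev_minor, ← hΔ] at h2
  have h3 : zev ((pm f)^[N] (X : ι → MvPolynomial ι ℤ)) (D0 * Δ) ≠ 0 := by
    rw [map_mul]; exact mul_ne_zero hD0 h2
  obtain ⟨v, hv⟩ := ne_zero_iff.1 h3
  refine ⟨n0, d, (coeff v (zev ((pm f)^[N] (X : ι → MvPolynomial ι ℤ)) (D0 * Δ))).natAbs, le_rfl, ?_⟩
  intro p hp hNp
  have : Fact p.Prime := ⟨hp⟩
  have h4 : zev ((pm f)^[N] (X : ι → MvPolynomial ι (AlgebraicClosure (ZMod p)))) (D0 * Δ) ≠ 0 := by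
    have e1 := ringHom_zev (MvPolynomial.map (Int.castRingHom (AlgebraicClosure (ZMod p)))) 
      ((pm f)^[N] (X : ι → MvPolynomial ι ℤ)) (D0 * Δ)
    rw [pm_iter_map] at e1
    simp only [map_X] at e1
    intro h0
    have e2 : (fun i => (X i : MvPolynomial ι (AlgebraicClosure (ZMod p)))) = X := rfl
    rw [e2, h0] at e1
    have e3 := congrArg (coeff v) e1
    rw [coeff_map, coeff_zero, eq_intCast, CharP.intCast_eq_zero_iff _ p] at e3
    have := Int.natAbs_dvd_natAbs.2 e3
    have := Nat.le_of_dvd (Int.natAbs_pos.2 hv) this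
    rw [Int.natAbs_natCast] at this
    omega
  obtain ⟨r0, a0, ha0, ha0'⟩ := quasi_fixed p f _ h4
  let F := IntermediateField.adjoin (ZMod p) (Set.range a0)
  have : FiniteDimensional (ZMod p) F := IntermediateField.finiteDimensional_adjoin 
    fun x _ => Algebra.IsIntegral.isIntegral x
  have : Finite F := Module.finite_of_finite (ZMod p)
  have hchar : CharP F p := charP_of_injective_algebraMap (algebraMap (ZMod p) F).injective p
  let a : ι → F := fun i => ⟨a0 i, IntermediateField.subset_adjoin _ _ ⟨i, rfl⟩⟩
  let θ : F →+* AlgebraicClosure (ZMod p) := algebraMap F _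
  have hθ : Function.Injective θ := θ.injective
  have hθa : (fun i => θ (a i)) = a0 := rfl
  have ha : pm f a = fun i => a i ^ p ^ r0 := by
    have := pm_map f θ a
    rw [hθa, ha0] at this
    ext1 i
    apply hθ
    rw [map_pow]
    exact congrFun this i
  have haD : zev a (D0 * Δ) ≠ 0 := by
    intro h
    have := ringHom_zev θ a (D0 * Δ)
    rw [h, hθa, map_zero] at this
    exact ha0' this.symm
  have hit : ∀ n, (pm f)^[n] a = fun i => a i ^ p ^ (r0 * n) := by
    intro n
    induction n with
    | zero => simp
    | succ n ih =>
      rw [Function.iterate_succ_apply', ih]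
      ext1 i
      rw [pm, ← zev_pow_char]
      have : zev a (f i) = a i ^ p ^ r0 := congrFun ha i
      rw [this, ← pow_mul, ← pow_add]; congr 2; ring
  have hitD : ∀ n, zev ((pm f)^[n] a) (D0 * Δ) ≠ 0 := by
    intro n
    rw [hit, ← zev_pow_char]
    exact pow_ne_zero _ haD
  have : Fintype F := Fintype.ofFinite F
  obtain ⟨e, _, he⟩ := FiniteField.card F p
  have hper : (pm f)^[(e : ℕ)] a = a := by
    rw [hit]
    ext1 i
    rw [mul_comm, pow_mul, ← he, FiniteField.pow_card_pow]
  obtain ⟨k, hk, hidem⟩ := exists_pow_idem (jacIt f e a)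
  refine ⟨F, inferInstance, inferInstance, hchar, a, e * k, ?_, ?_, ?_, ?_, ?_⟩
  · exact Nat.mul_pos e.pos hk
  · rw [Function.iterate_mul]; exact Function.iterate_fixed hper k
  · intro i h
    apply hitD i
    rw [map_mul, h, zero_mul]
  · rw [jacIt_congr_of_fix f _ _ hper]; exact hidem
  · apply rank_orbit f n0 d
    · intro z
      by_contra hlt
      push Not at hlt
      have hlt : d + 1 ≤ _ := hlt
      rw [le_rank_iff] at hlt
      obtain ⟨r', c', h'⟩ := hlt
      rw [← zev_minor] at h'
      have h5 : d + 1 ≤ ((jacIt f n0 (X : ι → MvPolynomial ι ℤ)).map (algebraMap (MvPolynomial ι ℤ) K)).rank := by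
        rw [le_rank_iff]
        refine ⟨r', c', ?_⟩
        intro h6
        have := RingHom.map_det (algebraMap (MvPolynomial ι ℤ) K) ((jacIt f n0 (X : ι → MvPolynomial ι ℤ)).submatrix r' c')
        rw [Matrix.submatrix_map] at h6
        have h7 := this.trans h6
        rw [hinj (h7.trans (map_zero _).symm), map_zero] at h'
        exact h' rfl
      omega
    · intro i
      rw [le_rank_iff]
      refine ⟨r, c, ?_⟩
      rw [← zev_minor, ← hΔ]
      intro h
      apply hitD i
      rw [map_mul, h, mul_zero]

theorem pm_iter_sub_mem {ι A : Type*} [CommRing A] (f : ι → MvPolynomial ι ℤ) (J : Ideal A)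
    (n : ℕ) (u v : ι → A) (h : ∀ i, u i - v i ∈ J) (i : ι) : (pm f)^[n] u i - (pm f)^[n] v i ∈ J := by
  induction n generalizing i with
  | zero => exact h i
  | succ n ih =>
    rw [Function.iterate_succ_apply', Function.iterate_succ_apply']
    exact zev_sub_mem _ _ _ ih (f i)

theorem surj_of_rows {K ι : Type*} [Field K] [Fintype ι] {d : ℕ} (E : Matrix ι ι K) (s : Fin d → ι)
    (hs : LinearIndependent K (E.submatrix s id).row) (b : Fin d → K) : ∃ w, ∀ j, E.mulVec w (s j) = b j := by
  have h1 := hs.rank_matrix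
  have h2 : LinearMap.range (E.submatrix s id).mulVecLin = ⊤ := by
    apply Submodule.eq_top_of_finrank_eq
    rw [Module.finrank_fin_fun]
    simpa [Matrix.rank] using h1
  obtain ⟨w, hw⟩ := LinearMap.range_eq_top.1 h2 b
  exact ⟨w, fun j => congrFun hw j⟩

section Lift

theorem lifting {ι O F : Type*} [Fintype ι] [DecidableEq ι] [CommRing O] [Field F] (p : ℕ)
    (θ : O →+* F) (hker : ∀ x, θ x = 0 ↔ (p : O) ∣ x) (hsurj : Function.Surjective θ)
    (f : ι → MvPolynomial ι ℤ) (a : ι → F) (m : ℕ) (hm : (pm f)^[m] a = a)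
    (hE : jacIt f m a * jacIt f m a = jacIt f m a)
    (hp : p.Prime) {d : ℕ} (s : Fin d → ι) 
    (hs : LinearIndependent F ((jacIt f m a).submatrix s id).row)
    (a' : ι → O) (ha' : ∀ i, θ (a' i) = a i) (u : Fin d → O) (n : ℕ) :
    ∃ y : ι → O, (∀ i, θ (y i) = a i) ∧ (∀ i, (p : O) ^ (n + 1) ∣ (pm f)^[m * p ^ n] y i - y i) ∧ 
      ∀ j, (p : O) ^ (n + 1) ∣ y (s j) - (a' (s j) + p * u j) := by
  induction n with
  | zero =>
    refine ⟨a', ha', fun i => ?_, fun j => ?_⟩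
    · rw [zero_add, pow_one, ← hker, map_sub, pow_zero, mul_one]
      have := congrFun (pm_iter_map f θ a' m) i
      rw [this, funext ha', hm, ha', sub_self]
    · rw [zero_add, pow_one]; exact ⟨- u j, by ring⟩
  | succ n ih =>
    obtain ⟨y, hy1, hy2, hy3⟩ := ih
    choose c hc using hy2
    choose b hb using hy3
    have hfix : (pm f)^[m * p ^ n] a = a := by
      rw [Function.iterate_mul]; exact Function.iterate_fixed hm _
    set M := m * p ^ n with hM
    set J := jacIt f M y with hJ
    set E := jacIt f m a with hEdef
    have hJE : J.map θ = E := by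
      rw [hJ, jacIt_map, funext hy1, hM, jacIt_congr_of_fix f m a hm]
      exact IsIdempotentElem.pow_eq hE (pow_ne_zero _ hp.ne_zero)
    have hJv : ∀ v i, θ (J.mulVec v i) = E.mulVec (fun i => θ (v i)) i := by
      intro v i
      rw [← hJE]
      exact RingHom.map_mulVec θ J v i
    obtain ⟨w, hw⟩ := surj_of_rows E s hs (fun j => - θ (b j) - θ (c (s j)))
    choose z hz using fun i => hsurj (θ (c i) + E.mulVec w i)
    set ε := (p : O) ^ (n + 1) with hε
    have hEE : ∀ v, E.mulVec (E.mulVec v) = E.mulVec v := by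
      intro v; rw [Matrix.mulVec_mulVec, hE]
    have key : ∀ j : ℕ, ∀ i, ε * p ∣ (pm f)^[M * j] (fun i => y i + ε * z i) i - 
        (y i + ε * (z i + j * J.mulVec c i)) := by
      intro j
      induction j with
      | zero => intro i; simp
      | succ j ihj =>
        intro i
        set v : ι → O := fun i => z i + j * J.mulVec c i with hv
        have e1 := pm_iter_sub_mem f (Ideal.span {ε * p}) M _ (fun i => y i + ε * v i) 
          (fun i => Ideal.mem_span_singleton.2 (ihj i)) i
        rw [← Function.iterate_add_apply, Ideal.mem_span_singleton] at e1
        have e2 := pm_iter_taylor f ε M y v i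
        rw [Ideal.mem_span_singleton, ← hJ] at e2
        have e3 : ε * p ∣ ε ^ 2 := by
          rw [pow_two]; exact mul_dvd_mul_left _ (dvd_pow_self _ (by omega))
        have e4 : (p : O) ∣ c i + J.mulVec v i - (z i + (j + 1 : ℕ) * J.mulVec c i) := by
          rw [← hker]
          simp only [map_sub, map_add, map_mul, map_natCast, hJv, hv, hz]
          have e5 : (fun i => θ (c i) + E.mulVec w i + (j : F) * E.mulVec (fun i => θ (c i)) i) = 
            (fun i => θ (c i)) + E.mulVec w + (j : F) • E.mulVec (fun i => θ (c i)) := rfl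
          rw [e5, Matrix.mulVec_add, Matrix.mulVec_add, Matrix.mulVec_smul, hEE, hEE]
          simp
          ring
        have e6 := dvd_add (dvd_add e1 (e3.trans e2)) (mul_dvd_mul_left ε e4)
        rw [show M * (j + 1) = M + M * j by ring]
        refine e6.trans (dvd_of_eq ?_)
        have := hc i
        push_cast
        linear_combination (-1 : O) * this
    refine ⟨fun i => y i + ε * z i, fun i => ?_, fun i => ?_, fun j => ?_⟩
    · rw [map_add, hy1, map_mul, hε, map_pow, (hker _).2 (dvd_refl _)]
      simp
    · have := key p i
      rw [pow_succ p n, ← mul_assoc, ← hM, pow_succ, ← hε]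
      refine (dvd_add this (Dvd.intro (J.mulVec c i) rfl)).trans (dvd_of_eq ?_)
      ring
    · have e1 : (p : O) ∣ b j + z (s j) := by
        rw [← hker, map_add, hz, hw]; ring
      rw [pow_succ, ← hε]
      refine (mul_dvd_mul_left ε e1).trans (dvd_of_eq ?_)
      linear_combination (-1 : O) * hb j

theorem separation {ι O F : Type*} [Fintype ι] [DecidableEq ι] [CommRing O] [Field F] (p : ℕ)
    (θ : O →+* F) (hker : ∀ x, θ x = 0 ↔ (p : O) ∣ x) (hsurj : Function.Surjective θ)
    (f : ι → MvPolynomial ι ℤ) (a : ι → F) (m : ℕ) (hm : (pm f)^[m] a = a)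
    (hE : jacIt f m a * jacIt f m a = jacIt f m a)
    [IsDomain O] [CharZero O] (hp : p.Prime) (hsep : ∀ x : O, (∀ n : ℕ, (p : O) ^ n ∣ x) → x = 0)
    (hm1 : 1 ≤ m) {d n0 : ℕ} (K : Type*) [Field K] [Algebra (MvPolynomial ι ℤ) K] [FaithfulSMul (MvPolynomial ι ℤ) K]
    (hd : ((jacIt f n0 (X : ι → MvPolynomial ι ℤ)).map (algebraMap (MvPolynomial ι ℤ) K)).rank ≤ d)
    (hd' : d ≤ (jacIt f m a).rank) (g : MvPolynomial ι ℤ) 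
    (hg : zev ((pm f)^[n0] (X : ι → MvPolynomial ι ℤ)) g ≠ 0) : 
    ∃ (n : ℕ) (y : ι → O), (∀ i, θ (y i) = a i) ∧ (∀ i, (p : O) ^ (n + 1) ∣ (pm f)^[m * p ^ n] y i - y i) ∧ 
      ¬ (p : O) ^ (n + 1) ∣ zev y g := by
  by_contra hcon
  push Not at hcon
  obtain ⟨s, hs⟩ := exists_rows_of_le_rank _ hd'
  obtain ⟨h, q, hh, hq⟩ := dependence f K n0 d hd g hg s
  choose a' ha' using fun i => hsurj (a i)
  apply hh
  have hpO : (p : O) ≠ 0 := Nat.cast_ne_zero.2 hp.ne_zero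
  have key : ∀ u : Fin d → O, zev (fun j => a' (s j) + p * u j) h = 0 := by
    intro u
    have key2 : ∀ n : ℕ, (p : O) ^ (n + 1) ∣ zev (fun j => a' (s j) + p * u j) h := by
      intro n
      obtain ⟨y, hy1, hy2, hy3⟩ := lifting p θ hker hsurj f a m hm hE hp s hs a' ha' u n
      have hy4 := hcon n y hy1 hy2
      set M := m * p ^ n with hM
      have hM1 : 1 ≤ M := Nat.mul_pos hm1 (pow_pos hp.pos _)
      have hy5 : ∀ j i, (pm f)^[M * j] y i - y i ∈ Ideal.span {(p : O) ^ (n + 1)} := by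
        intro j
        induction j with
        | zero => intro i; simp
        | succ j ih =>
          intro i
          have e1 := pm_iter_sub_mem f _ M _ _ ih i
          rw [← Function.iterate_add_apply] at e1
          have e2 := Ideal.add_mem _ e1 (Ideal.mem_span_singleton.2 (hy2 i))
          rw [show M * (j + 1) = M + M * j by ring]
          simpa using e2
      have hle : n0 ≤ M * n0 := Nat.le_mul_of_pos_left _ hM1
      obtain ⟨l, hl⟩ := Nat.exists_eq_add_of_le hle
      set y' := (pm f)^[l] y with hy'
      have e0 : (pm f)^[n0] y' = (pm f)^[M * n0] y := by
        rw [hl, Function.iterate_add_apply]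
      have e1 := congrArg (zev y') hq
      rw [map_mul, ringHom_zev, ringHom_zev] at e1
      have e2 : ∀ i, zev y' ((pm f)^[n0] (X : ι → MvPolynomial ι ℤ) i) = (pm f)^[M * n0] y i := by
        intro i
        rw [← e0]
        have := congrFun (pm_iter_map f (zev y') X n0) i
        rw [this]; simp
      simp only [e2] at e1
      rw [← Ideal.mem_span_singleton] at hy4 ⊢
      have e3 := zev_sub_mem _ _ _ (hy5 n0) g
      have e4 : zev ((pm f)^[M * n0] y) g ∈ Ideal.span {(p : O) ^ (n + 1)} := by
        simpa using Ideal.add_mem _ e3 hy4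
      have e5 : zev (fun j => (pm f)^[M * n0] y (s j)) h ∈ Ideal.span {(p : O) ^ (n + 1)} := by
        rw [e1]; exact Ideal.mul_mem_right _ _ e4
      have e6 := zev_sub_mem (Ideal.span {(p : O) ^ (n + 1)}) (fun j => (pm f)^[M * n0] y (s j)) 
        (fun j => a' (s j) + p * u j) (fun j => by
          have := Ideal.add_mem _ (hy5 n0 (s j)) (Ideal.mem_span_singleton.2 (hy3 j))
          simpa using this) h
      have := Ideal.sub_mem _ e5 e6
      simpa using this
    apply hsep
    intro n
    exact (pow_dvd_pow _ (Nat.le_succ n)).trans (key2 n)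
  have hmap : MvPolynomial.map (Int.castRingHom O) h = 0 := by
    apply MvPolynomial.funext_set (fun j => Set.range (fun t : O => a' (s j) + p * t))
    · intro j
      apply Set.infinite_range_of_injective
      intro t t' htt
      exact mul_left_cancel₀ hpO (add_left_cancel htt)
    · intro x hx
      choose u hu using fun j => hx j (Set.mem_univ j)
      have := key u
      rw [map_zero, eval_map]
      have hx' : x = fun j => a' (s j) + p * u j := by ext j; exact (hu j).symm
      rw [hx']
      exact this
  exact MvPolynomial.map_injective _ (RingHom.injective_int _) (by rw [hmap, map_zero])
end Lift

theorem finite_quot {O F : Type*} [CommRing O] [Field F] [Finite F] (p : ℕ)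
    (θ : O →+* F) (hker : ∀ x, θ x = 0 ↔ (p : O) ∣ x) (hsurj : Function.Surjective θ) (n : ℕ) :
    Finite (O ⧸ Ideal.span {(p : O) ^ n}) := by
  have key : ∃ T : Set O, T.Finite ∧ ∀ x, ∃ t ∈ T, (p : O) ^ n ∣ x - t := by
    induction n with
    | zero => exact ⟨{0}, Set.finite_singleton _, fun x => ⟨0, rfl, by simp⟩⟩
    | succ n ih =>
      obtain ⟨T, hT, hT'⟩ := ih
      choose σ hσ using hsurj
      refine ⟨Set.image (fun q : F × O => σ q.1 + p * q.2) (Set.univ ×ˢ T), (Set.finite_univ.prod hT).image _, fun x => ?_⟩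
      obtain ⟨y, hy⟩ := (hker (x - σ (θ x))).1 (by rw [map_sub, hσ, sub_self])
      obtain ⟨t, ht, ht'⟩ := hT' y
      refine ⟨_, ⟨(θ x, t), ⟨Set.mem_univ _, ht⟩, rfl⟩, ?_⟩
      rw [pow_succ']
      refine (mul_dvd_mul_left (p : O) ht').trans (dvd_of_eq ?_)
      simp only
      linear_combination (-1 : O) * hy
  obtain ⟨T, hT, hT'⟩ := key
  have : Finite T := hT
  apply Finite.of_surjective (fun t : T => Ideal.Quotient.mk (Ideal.span {(p : O) ^ n}) t)
  intro x
  obtain ⟨x, rfl⟩ := Ideal.Quotient.mk_surjective x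
  obtain ⟨t, ht, ht'⟩ := hT' x
  refine ⟨⟨t, ht⟩, ?_⟩
  simp only
  rw [Ideal.Quotient.mk_eq_mk_iff_sub_mem, Ideal.mem_span_singleton, ← neg_sub, dvd_neg]
  exact ht'

theorem witt_facts (p : ℕ) [Fact p.Prime] (F : Type) [Field F] [Finite F] [CharP F p] :
    CharZero (WittVector p F) ∧ 
    (∀ x : WittVector p F, WittVector.constantCoeff x = 0 ↔ (p : WittVector p F) ∣ x) ∧
    Function.Surjective (WittVector.constantCoeff : WittVector p F →+* F) ∧
    (∀ x : WittVector p F, (∀ n : ℕ, (p : WittVector p F) ^ n ∣ x) → x = 0) := by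
  have hp : p.Prime := Fact.out
  have h1 : ∀ x : WittVector p F, WittVector.constantCoeff x = 0 ↔ (p : WittVector p F) ∣ x := by
    intro x
    constructor
    · intro hx
      by_cases h0 : x = 0
      · rw [h0]; exact dvd_zero _
      obtain ⟨m, b, hb, rfl⟩ := WittVector.exists_eq_pow_p_mul x h0
      rcases m with _ | m
      · rw [pow_zero, one_mul] at hx
        exact absurd hx hb
      · exact Dvd.dvd.mul_right (dvd_pow_self _ (by omega)) _
    · rintro ⟨y, rfl⟩
      rw [map_mul, map_natCast, CharP.cast_eq_zero, zero_mul]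
  refine ⟨?_, h1, ?_, ?_⟩
  · obtain ⟨c, hc⟩ := CharP.exists (WittVector p F)
    rcases CharP.char_is_prime_or_zero (WittVector p F) c with h | h
    · have h2 : (c : F) = 0 := by
        have : (c : WittVector p F) = 0 := CharP.cast_eq_zero _ c
        have := congrArg (WittVector.constantCoeff) this
        rwa [map_natCast, map_zero] at this
      rw [CharP.cast_eq_zero_iff F p] at h2
      have h3 := (Nat.prime_dvd_prime_iff_eq hp h).1 h2
      subst h3
      exact absurd (CharP.cast_eq_zero (WittVector p F) p) (WittVector.p_nonzero p F)
    · subst h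
      exact CharP.charP_to_charZero _
  · intro x
    exact ⟨WittVector.teichmuller p x, WittVector.teichmuller_coeff_zero p x⟩
  · intro x hx
    by_contra h0
    obtain ⟨m, b, hb, rfl⟩ := WittVector.exists_eq_pow_p_mul x h0
    have h2 := hx (m + 1)
    rw [pow_succ] at h2
    have h3 := (mul_dvd_mul_iff_left (pow_ne_zero m (WittVector.p_nonzero p F))).1 h2
    exact hb ((h1 b).2 h3)

theorem arith {ι : Type*} [Fintype ι] [DecidableEq ι] (f : ι → MvPolynomial ι ℤ) (D0 : MvPolynomial ι ℤ)
    (hD0 : zev ((pm f)^[Fintype.card ι] (X : ι → MvPolynomial ι ℤ)) D0 ≠ 0) :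
    ∃ n0 Nbd : ℕ, ∀ p : ℕ, p.Prime → Nbd < p → ∃ (F : Type) (_ : Field F) (_ : Finite F) (_ : CharP F p) 
        (a : ι → F) (m : ℕ), 1 ≤ m ∧ (pm f)^[m] a = a ∧ (∀ i, zev ((pm f)^[i] a) D0 ≠ 0) ∧ 
      ∀ g : MvPolynomial ι ℤ, zev ((pm f)^[n0] (X : ι → MvPolynomial ι ℤ)) g ≠ 0 →
        ∃ (n : ℕ) (R : Type) (_ : CommRing R) (_ : Finite R) (θ : R →+* F) (y : ι → R),
          (∀ x, θ x = 0 → (p : R) ∣ x) ∧ (p : R) ^ (n + 1) = 0 ∧ (∀ i, θ (y i) = a i) ∧ 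
          (pm f)^[m * p ^ n] y = y ∧ zev y g ≠ 0 := by
  obtain ⟨n0, d, Nbd, hd, H⟩ := exists_point (K := FractionRing (MvPolynomial ι ℤ)) f D0 hD0
  refine ⟨n0, Nbd, fun p hp hlt => ?_⟩
  obtain ⟨F, _, _, hchar, a, m, hm1, hm, hD, hE, hrank⟩ := H p hp hlt
  refine ⟨F, inferInstance, inferInstance, hchar, a, m, hm1, hm, hD, fun g hg => ?_⟩
  have : Fact p.Prime := ⟨hp⟩
  obtain ⟨h0, hker, hsurj, hsep⟩ := witt_facts p F
  obtain ⟨n, y, hy1, hy2, hy3⟩ := separation p WittVector.constantCoeff hker hsurj f a m hm hE hp hsep hm1 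
    (FractionRing (MvPolynomial ι ℤ)) hd hrank g hg
  set I := Ideal.span {(p : WittVector p F) ^ (n + 1)} with hI
  have hle : ∀ x ∈ I, WittVector.constantCoeff x = 0 := by
    intro x hx
    rw [hI, Ideal.mem_span_singleton] at hx
    exact (hker x).2 ((dvd_pow_self _ (by omega)).trans hx)
  refine ⟨n, WittVector p F ⧸ I, inferInstance, finite_quot p _ hker hsurj _, 
    Ideal.Quotient.lift I WittVector.constantCoeff hle, fun i => Ideal.Quotient.mk I (y i), ?_, ?_, ?_, ?_, ?_⟩
  · intro x hx
    obtain ⟨x, rfl⟩ := Ideal.Quotient.mk_surjective x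
    rw [Ideal.Quotient.lift_mk] at hx
    obtain ⟨z, rfl⟩ := (hker x).1 hx
    exact ⟨Ideal.Quotient.mk I z, by rw [map_mul, map_natCast]⟩
  · have : Ideal.Quotient.mk I ((p : WittVector p F) ^ (n + 1)) = 0 := 
      Ideal.Quotient.eq_zero_iff_mem.2 (Ideal.mem_span_singleton_self _)
    rwa [map_pow, map_natCast] at this
  · intro i
    rw [Ideal.Quotient.lift_mk]; exact hy1 i
  · rw [← pm_iter_map]
    ext1 i
    rw [Ideal.Quotient.mk_eq_mk_iff_sub_mem, hI, Ideal.mem_span_singleton]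
    exact hy2 i
  · rw [← ringHom_zev, Ne, Ideal.Quotient.eq_zero_iff_mem, hI, Ideal.mem_span_singleton]
    exact hy3

section Words
variable {k : ℕ} {A B : Type*} [CommRing A] [CommRing B]

def mat (z : Fin k × Fin 2 × Fin 2 → A) (i : Fin k) : Matrix (Fin 2) (Fin 2) A :=
  Matrix.of fun a b => z (i, a, b)

noncomputable def letterMat (z : Fin k × Fin 2 × Fin 2 → A) (l : Fin k × Bool) : Matrix (Fin 2) (Fin 2) A :=
  bif l.2 then mat z l.1 else (mat z l.1).adjugate

noncomputable def evalW (z : Fin k × Fin 2 × Fin 2 → A) (w : List (Fin k × Bool)) : Matrix (Fin 2) (Fin 2) A :=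
  (w.map (letterMat z)).prod

theorem mat_map (θ : A →+* B) (z : Fin k × Fin 2 × Fin 2 → A) (i : Fin k) : 
    θ.mapMatrix (mat z i) = mat (fun q => θ (z q)) i := rfl

theorem evalW_map (θ : A →+* B) (z : Fin k × Fin 2 × Fin 2 → A) (w : List (Fin k × Bool)) :
    θ.mapMatrix (evalW z w) = evalW (fun q => θ (z q)) w := by
  rw [evalW, map_list_prod, evalW, List.map_map]
  congr 2
  ext1 l
  rcases l with ⟨i, _ | _⟩
  · simp only [Function.comp, letterMat, cond_false]
    rw [← mat_map, ← RingHom.map_adjugate]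
  · rfl

noncomputable def polyf (φ : FreeGroup (Fin k) →* FreeGroup (Fin k)) :
    Fin k × Fin 2 × Fin 2 → MvPolynomial (Fin k × Fin 2 × Fin 2) ℤ :=
  fun q => evalW X (φ (FreeGroup.of q.1)).toWord q.2.1 q.2.2

theorem zev_evalW (z : Fin k × Fin 2 × Fin 2 → A) (y : Fin k × Fin 2 × Fin 2 → MvPolynomial (Fin k × Fin 2 × Fin 2) ℤ)
    (w : List (Fin k × Bool)) (a b : Fin 2) :
    zev z (evalW y w a b) = evalW (fun q => zev z (y q)) w a b := by
  rw [← evalW_map]; rfl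

theorem mat_pm (φ : FreeGroup (Fin k) →* FreeGroup (Fin k)) (z : Fin k × Fin 2 × Fin 2 → A) (i : Fin k) :
    mat (pm (polyf φ) z) i = evalW z (φ (FreeGroup.of i)).toWord := by
  ext a b
  simp only [mat, pm, polyf, Matrix.of_apply, zev_evalW, zev_X]

def good (z : Fin k × Fin 2 × Fin 2 → A) : Prop := ∀ i, IsUnit (mat z i)

open Classical in
noncomputable def ut (z : Fin k × Fin 2 × Fin 2 → A) (i : Fin k) : (Matrix (Fin 2) (Fin 2) A)ˣ :=
  if h : IsUnit (mat z i) then h.unit else 1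

theorem coe_ut {z : Fin k × Fin 2 × Fin 2 → A} (hz : good z) (i : Fin k) : (ut z i : Matrix (Fin 2) (Fin 2) A) = mat z i := by
  rw [ut, dif_pos (hz i)]; rfl

noncomputable def rho (z : Fin k × Fin 2 × Fin 2 → A) : FreeGroup (Fin k) →* (Matrix (Fin 2) (Fin 2) A)ˣ :=
  FreeGroup.lift (ut z)

theorem evalW_eq {z : Fin k × Fin 2 × Fin 2 → A} (hz : good z) (w : List (Fin k × Bool)) :
    ∃ c : Aˣ, evalW z w = (c : A) • (rho z (FreeGroup.mk w) : Matrix (Fin 2) (Fin 2) A) := by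
  induction w with
  | nil => exact ⟨1, by simp [evalW, ← FreeGroup.one_eq_mk]⟩
  | cons l w ih =>
    obtain ⟨c, hc⟩ := ih
    have h1 : ∃ c' : Aˣ, letterMat z l = (c' : A) • (rho z (FreeGroup.mk [l]) : Matrix (Fin 2) (Fin 2) A) := by
      rcases l with ⟨i, _ | _⟩
      · have hu := (Matrix.isUnit_iff_isUnit_det _).1 (hz i)
        refine ⟨hu.unit, ?_⟩
        have : (rho z (FreeGroup.mk [(i, false)])) = (ut z i)⁻¹ := by
          simp [rho]
        rw [this]
        have h2 : mat z i * ((hu.unit : A) • (((ut z i)⁻¹ : (Matrix (Fin 2) (Fin 2) A)ˣ) : Matrix (Fin 2) (Fin 2) A)) = mat z i * (mat z i).adjugate := by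
          have h3 : mat z i * (((ut z i)⁻¹ : (Matrix (Fin 2) (Fin 2) A)ˣ) : Matrix (Fin 2) (Fin 2) A) = 1 := by
            rw [← coe_ut hz, Units.mul_inv]
          rw [Matrix.mul_adjugate, Matrix.mul_smul, h3]
          rfl
        exact ((hz i).mul_left_cancel h2).symm
      · refine ⟨1, ?_⟩
        have : (rho z (FreeGroup.mk [(i, true)])) = (ut z i) := by
          simp [rho]
        rw [this, coe_ut hz]
        simp [letterMat]
    obtain ⟨c', hc'⟩ := h1
    refine ⟨c' * c, ?_⟩
    have e1 : FreeGroup.mk (l :: w) = FreeGroup.mk [l] * FreeGroup.mk w := by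
      rw [FreeGroup.mul_mk]; rfl
    have e2 : evalW z (l :: w) = letterMat z l * evalW z w := by simp [evalW]
    rw [e1, e2, map_mul, hc, hc', Units.val_mul, Units.val_mul, Matrix.smul_mul, Matrix.mul_smul, smul_smul]

theorem isUnit_evalW {z : Fin k × Fin 2 × Fin 2 → A} (hz : good z) (w : List (Fin k × Bool)) : IsUnit (evalW z w) := by
  obtain ⟨c, hc⟩ := evalW_eq hz w
  rw [hc]
  exact ⟨c • rho z (FreeGroup.mk w), rfl⟩

theorem good_pm (φ : FreeGroup (Fin k) →* FreeGroup (Fin k)) {z : Fin k × Fin 2 × Fin 2 → A} (hz : good z) :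
    good (pm (polyf φ) z) := by
  intro i
  rw [mat_pm]
  exact isUnit_evalW hz _

theorem good_pm_iter (φ : FreeGroup (Fin k) →* FreeGroup (Fin k)) {z : Fin k × Fin 2 × Fin 2 → A} (hz : good z) (n : ℕ) :
    good ((pm (polyf φ))^[n] z) := by
  induction n with
  | zero => exact hz
  | succ n ih => rw [Function.iterate_succ_apply']; exact good_pm φ ih

/-- conjugation action of units on the monoid -/
def conjHom (M : Type*) [Monoid M] : Mˣ →* Equiv.Perm M where
  toFun u := ⟨fun x => u * x * (u⁻¹ : Mˣ), fun x => (u⁻¹ : Mˣ) * x * u, 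
    fun x => by simp [mul_assoc], fun x => by simp [mul_assoc]⟩
  map_one' := by ext x; simp
  map_mul' u v := by ext x; simp [mul_assoc]

theorem conjHom_apply {M : Type*} [Monoid M] (u : Mˣ) (x : M) : conjHom M u x = u * x * (u⁻¹ : Mˣ) := rfl

theorem conjHom_smul (u v : (Matrix (Fin 2) (Fin 2) A)ˣ) (c : A) 
    (h : (u : Matrix (Fin 2) (Fin 2) A) = c • (v : Matrix (Fin 2) (Fin 2) A)) :
    conjHom _ u = conjHom _ v := by
  ext1 x
  rw [conjHom_apply, conjHom_apply, Units.mul_inv_eq_iff_eq_mul, h, Matrix.smul_mul, Matrix.mul_smul]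
  simp [mul_assoc]

theorem conjHom_eq_one_iff (u : (Matrix (Fin 2) (Fin 2) A)ˣ) : conjHom _ u = 1 ↔
    (u.1 0 1 = 0 ∧ u.1 1 0 = 0 ∧ u.1 0 0 = u.1 1 1) := by
  constructor
  · intro h
    have h1 : ∀ x, (u : Matrix (Fin 2) (Fin 2) A) * x = x * u := by
      intro x
      have := congrArg (fun q => q x) h
      simp only [Equiv.Perm.coe_one, id, conjHom_apply, Units.mul_inv_eq_iff_eq_mul] at this
      exact this
    have e1 := h1 !![1, 0; 0, 0]
    have e2 := h1 !![0, 1; 0, 0]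
    have a1 := congrFun (congrFun e1 0) 1
    have a2 := congrFun (congrFun e1 1) 0
    have a3 := congrFun (congrFun e2 0) 1
    simp [Matrix.mul_apply, Fin.sum_univ_two] at a1 a2 a3
    exact ⟨a1.symm, a2, a3⟩
  · rintro ⟨h1, h2, h3⟩
    have : (u : Matrix (Fin 2) (Fin 2) A) = u.1 1 1 • ((1 : (Matrix (Fin 2) (Fin 2) A)ˣ) : Matrix (Fin 2) (Fin 2) A) := by
      ext i j
      fin_cases i <;> fin_cases j <;> simp [h1, h2, h3]
    rw [conjHom_smul _ _ _ this, map_one]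

noncomputable def gam (z : Fin k × Fin 2 × Fin 2 → A) : FreeGroup (Fin k) →* Equiv.Perm (Matrix (Fin 2) (Fin 2) A) :=
  (conjHom _).comp (rho z)

theorem gam_of (z : Fin k × Fin 2 × Fin 2 → A) (i : Fin k) : gam z (FreeGroup.of i) = conjHom _ (ut z i) := by
  simp [gam, rho]

theorem gam_pm (φ : FreeGroup (Fin k) →* FreeGroup (Fin k)) {z : Fin k × Fin 2 × Fin 2 → A} (hz : good z)
    (W : FreeGroup (Fin k)) : gam (pm (polyf φ) z) W = gam z (φ W) := by
  have : gam (pm (polyf φ) z) = (gam z).comp φ := by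
    ext1 i
    rw [gam_of]
    obtain ⟨c, hc⟩ := evalW_eq hz (φ (FreeGroup.of i)).toWord
    rw [FreeGroup.mk_toWord] at hc
    apply conjHom_smul _ _ (c : A)
    rw [coe_ut (good_pm φ hz), mat_pm, hc]
  rw [this]; rfl

theorem gam_pm_iter (φ : FreeGroup (Fin k) →* FreeGroup (Fin k)) {z : Fin k × Fin 2 × Fin 2 → A} (hz : good z)
    (n : ℕ) (W : FreeGroup (Fin k)) : gam ((pm (polyf φ))^[n] z) W = gam z (φ^[n] W) := by
  induction n generalizing W with
  | zero => rfl
  | succ n ih => rw [Function.iterate_succ_apply', gam_pm φ (good_pm_iter φ hz n), ih, Function.iterate_succ_apply]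

def isScal (M : Matrix (Fin 2) (Fin 2) A) : Prop := M 0 1 = 0 ∧ M 1 0 = 0 ∧ M 0 0 - M 1 1 = 0

theorem gam_eq_one_iff {z : Fin k × Fin 2 × Fin 2 → A} (hz : good z) (W : FreeGroup (Fin k)) :
    gam z W = 1 ↔ isScal (evalW z W.toWord) := by
  obtain ⟨c, hc⟩ := evalW_eq hz W.toWord
  rw [FreeGroup.mk_toWord] at hc
  rw [gam, MonoidHom.comp_apply, conjHom_eq_one_iff, isScal, hc]
  simp [← smul_sub, ← mul_sub, sub_eq_zero]
end Words

section Explicit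
variable {k : ℕ}

def pt (l : Fin k × Bool) : ℤ := 2 * (l.1 : ℕ) + (if l.2 then 1 else 0)

theorem pt_inj {l l' : Fin k × Bool} (h : pt l = pt l') : l = l' := by
  rcases l with ⟨⟨i, hi⟩, b⟩
  rcases l' with ⟨⟨i', hi'⟩, b'⟩
  rcases b <;> rcases b' <;> simp [pt] at h ⊢ <;> omega

def flp (l : Fin k × Bool) : Fin k × Bool := (l.1, !l.2)

def sg (l : Fin k × Bool) : ℤ := if l.2 then 1 else -1

def Pm (l : Fin k × Bool) : Matrix (Fin 2) (Fin 2) ℤ :=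
  !![-(sg l * pt (flp l)), sg l; -(sg l * pt l * pt (flp l)), sg l * pt l]

noncomputable def lin (a b : ℤ) : Polynomial ℤ := Polynomial.C a * Polynomial.X + Polynomial.C b

theorem lin_deg (a b : ℤ) : (lin a b).natDegree ≤ 1 := Polynomial.natDegree_linear_le
theorem lin_coeff (a b : ℤ) : (lin a b).coeff 1 = a := by
  rw [lin, Polynomial.coeff_add, Polynomial.coeff_C_mul, Polynomial.coeff_X_one, Polynomial.coeff_C_succ, mul_one, add_zero]

noncomputable def zP : Fin k × Fin 2 × Fin 2 → Polynomial ℤ := fun q =>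
  lin (Pm (q.1, true) q.2.1 q.2.2) (Pm (q.1, false) q.2.1 q.2.2)

theorem letterMat_zP (l : Fin k × Bool) : letterMat zP l = Matrix.of fun a b => lin (Pm l a b) (Pm (flp l) a b) := by
  rcases l with ⟨i, _ | _⟩
  · refine Matrix.ext fun a b => ?_
    fin_cases a <;> fin_cases b <;>
      simp [letterMat, mat, zP, Matrix.adjugate_fin_two, lin, Pm, flp, sg] <;> ring
  · refine Matrix.ext fun a b => ?_
    fin_cases a <;> fin_cases b <;> simp [letterMat, mat, zP, flp]

theorem explicit_aux (l : Fin k × Bool) (w : List (Fin k × Bool)) (h : FreeGroup.IsReduced (l :: w)) :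
    ∃ c : ℤ, c ≠ 0 ∧ (∀ a, (evalW zP (l :: w) a 1).natDegree ≤ (l :: w).length) ∧
      (evalW zP (l :: w) 0 1).coeff (l :: w).length = c ∧ 
      (evalW zP (l :: w) 1 1).coeff (l :: w).length = c * pt l := by
  induction w generalizing l with
  | nil =>
    have e : evalW zP [l] = letterMat zP l := by simp [evalW]
    refine ⟨sg l, ?_, ?_, ?_, ?_⟩
    · simp only [sg]; split <;> simp
    · intro a; rw [e, letterMat_zP]; exact lin_deg _ _
    · rw [e, letterMat_zP]
      simp [lin_coeff, Pm]
    · rw [e, letterMat_zP]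
      simp [lin_coeff, Pm]
  | cons l2 w ih =>
    rw [FreeGroup.IsReduced, List.isChain_cons_cons] at h
    obtain ⟨c, hc, hdeg, h0, h1⟩ := ih l2 h.2
    have e : ∀ a, evalW zP (l :: l2 :: w) a 1 = lin (Pm l a 0) (Pm (flp l) a 0) * evalW zP (l2 :: w) 0 1 +
        lin (Pm l a 1) (Pm (flp l) a 1) * evalW zP (l2 :: w) 1 1 := by
      intro a
      have : evalW zP (l :: l2 :: w) = letterMat zP l * evalW zP (l2 :: w) := by simp [evalW]
      rw [this, letterMat_zP, Matrix.mul_apply, Fin.sum_univ_two]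
      rfl
    set L := (l2 :: w).length with hL
    have hlen : (l :: l2 :: w).length = 1 + L := by rw [List.length_cons, add_comm]
    have hco : ∀ a, (evalW zP (l :: l2 :: w) a 1).coeff (1 + L) = Pm l a 0 * c + Pm l a 1 * (c * pt l2) := by
      intro a
      rw [e, Polynomial.coeff_add, Polynomial.coeff_mul_add_eq_of_natDegree_le (lin_deg _ _) (hdeg 0),
        Polynomial.coeff_mul_add_eq_of_natDegree_le (lin_deg _ _) (hdeg 1), lin_coeff, lin_coeff, h0, h1]
    refine ⟨sg l * (pt l2 - pt (flp l)) * c, ?_, ?_, ?_, ?_⟩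
    · refine mul_ne_zero (mul_ne_zero ?_ ?_) hc
      · simp only [sg]; split <;> simp
      · rw [sub_ne_zero]
        intro hpt
        have := pt_inj hpt
        rw [this] at h
        have h3 := h.1 rfl
        simp [flp] at h3
    · intro a
      rw [hlen, e]
      refine (Polynomial.natDegree_add_le _ _).trans (max_le ?_ ?_)
      · exact Polynomial.natDegree_mul_le.trans (add_le_add (lin_deg _ _) (hdeg 0))
      · exact Polynomial.natDegree_mul_le.trans (add_le_add (lin_deg _ _) (hdeg 1))
    · rw [hlen, hco]
      simp [Pm]; ring
    · rw [hlen, hco]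
      simp [Pm]; ring

theorem explicit (W : FreeGroup (Fin k)) (hW : W ≠ 1) : evalW zP W.toWord 0 1 ≠ 0 := by
  have hred : FreeGroup.IsReduced W.toWord := FreeGroup.isReduced_toWord
  rcases hw : W.toWord with _ | ⟨l, w⟩
  · exact absurd (FreeGroup.toWord_eq_nil_iff.1 hw) hW
  · rw [hw] at hred
    obtain ⟨c, hc, -, h0, -⟩ := explicit_aux l w hred
    intro h
    rw [h, Polynomial.coeff_zero] at h0
    exact hc h0.symm

noncomputable def zK : Fin k × Fin 2 × Fin 2 → FractionRing (Polynomial ℤ) := fun q => algebraMap _ _ (zP q)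

theorem good_zK : good (zK (k := k)) := by
  intro i
  rw [Matrix.isUnit_iff_isUnit_det, isUnit_iff_ne_zero]
  have : mat (zK (k := k)) i = (algebraMap (Polynomial ℤ) (FractionRing (Polynomial ℤ))).mapMatrix (mat zP i) := rfl
  rw [this, ← RingHom.map_det, Ne, map_eq_zero_iff _ (IsFractionRing.injective (Polynomial ℤ) _)]
  have h2 : (mat zP i).det = Polynomial.C ((pt (i, true) - pt (i, false)) ^ 2) * Polynomial.X := by
    rw [Matrix.det_fin_two]
    simp [mat, zP, lin, Pm, flp, sg]
    ring
  rw [h2]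
  refine mul_ne_zero ?_ Polynomial.X_ne_zero
  rw [Ne, Polynomial.C_eq_zero]
  apply pow_ne_zero
  rw [sub_ne_zero]
  intro h
  have := pt_inj h
  simp at this

theorem gam_zK (W : FreeGroup (Fin k)) (hW : W ≠ 1) : gam zK W ≠ 1 := by
  rw [Ne, gam_eq_one_iff good_zK]
  intro h
  have h1 := h.1
  have : evalW (zK (k := k)) W.toWord = (algebraMap (Polynomial ℤ) (FractionRing (Polynomial ℤ))).mapMatrix (evalW zP W.toWord) := 
    (evalW_map _ _ _).symm
  rw [this] at h1
  exact explicit W hW ((map_eq_zero_iff _ (IsFractionRing.injective (Polynomial ℤ) _)).1 h1)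

variable (φ : FreeGroup (Fin k) →* FreeGroup (Fin k))

theorem zev_iter {A : Type*} [CommRing A] {ι : Type*} (f : ι → MvPolynomial ι ℤ) (z : ι → A) (n : ℕ) (g : MvPolynomial ι ℤ) :
    zev z (zev ((pm f)^[n] (X : ι → MvPolynomial ι ℤ)) g) = zev ((pm f)^[n] z) g := by
  rw [ringHom_zev, pm_iter_map]
  simp

noncomputable def D0 (k : ℕ) : MvPolynomial (Fin k × Fin 2 × Fin 2) ℤ := ∏ i, (mat X i).det

theorem zev_D0 {A : Type*} [CommRing A] (z : Fin k × Fin 2 × Fin 2 → A) : zev z (D0 k) = ∏ i, (mat z i).det := by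
  rw [D0, map_prod]
  refine Finset.prod_congr rfl fun i _ => ?_
  rw [RingHom.map_det, mat_map]
  simp

theorem D0_ne (n : ℕ) : zev ((pm (polyf φ))^[n] (X : _ → MvPolynomial (Fin k × Fin 2 × Fin 2) ℤ)) (D0 k) ≠ 0 := by
  intro h
  have h1 := congrArg (zev zK) h
  rw [zev_iter, map_zero, zev_D0, Finset.prod_eq_zero_iff] at h1
  obtain ⟨i, -, hi⟩ := h1
  have := good_pm_iter φ good_zK n i
  rw [Matrix.isUnit_iff_isUnit_det, hi] at this
  exact not_isUnit_zero this

theorem exists_sep (hφ : Function.Injective φ) (n : ℕ) (W : FreeGroup (Fin k)) (hW : W ≠ 1) :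
    ∃ g : MvPolynomial (Fin k × Fin 2 × Fin 2) ℤ, 
      zev ((pm (polyf φ))^[n] (X : _ → MvPolynomial (Fin k × Fin 2 × Fin 2) ℤ)) g ≠ 0 ∧ 
      ∀ {A : Type} [CommRing A] (z : Fin k × Fin 2 × Fin 2 → A), good z → zev z g ≠ 0 → gam z W ≠ 1 := by
  have h1 : gam ((pm (polyf φ))^[n] zK) W ≠ 1 := by
    rw [gam_pm_iter φ good_zK]
    apply gam_zK
    intro h
    have : φ^[n] 1 = 1 := by
      clear h hW
      induction n with
      | zero => rfl
      | succ n ih => rw [Function.iterate_succ_apply, map_one, ih]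
    exact hW (hφ.iterate n (h.trans this.symm))
  rw [Ne, gam_eq_one_iff (good_pm_iter φ good_zK n)] at h1
  have key : ∀ g, zev ((pm (polyf φ))^[n] (zK (k := k))) g ≠ 0 → 
      zev ((pm (polyf φ))^[n] (X : _ → MvPolynomial (Fin k × Fin 2 × Fin 2) ℤ)) g ≠ 0 := by
    intro g hg h
    apply hg
    rw [← zev_iter, h, map_zero]
  have hent : ∀ {A : Type} [CommRing A] (z : Fin k × Fin 2 × Fin 2 → A) (a b : Fin 2), 
      zev z (evalW X W.toWord a b) = evalW z W.toWord a b := by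
    intro A _ z a b
    rw [zev_evalW]; simp
  by_cases h01 : evalW ((pm (polyf φ))^[n] (zK (k := k))) W.toWord 0 1 = 0
  · by_cases h10 : evalW ((pm (polyf φ))^[n] (zK (k := k))) W.toWord 1 0 = 0
    · refine ⟨evalW X W.toWord 0 0 - evalW X W.toWord 1 1, key _ ?_, ?_⟩
      · rw [map_sub, hent, hent]
        intro h
        exact h1 ⟨h01, h10, h⟩
      · intro A _ z hz hne h
        rw [gam_eq_one_iff hz] at h
        rw [map_sub, hent, hent] at hne
        exact hne h.2.2
    · refine ⟨evalW X W.toWord 1 0, key _ (by rwa [hent]), ?_⟩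
      intro A _ z hz hne h
      rw [gam_eq_one_iff hz] at h
      rw [hent] at hne
      exact hne h.2.1
  · refine ⟨evalW X W.toWord 0 1, key _ (by rwa [hent]), ?_⟩
    intro A _ z hz hne h
    rw [gam_eq_one_iff hz] at h
    rw [hent] at hne
    exact hne h.1
end Explicit

section Torus
variable {k : ℕ} (φ : FreeGroup (Fin k) →* FreeGroup (Fin k))

/-- the stable letter -/
def stab : MappingTorus k φ := PresentedGroup.of none

/-- inclusion of the fibre -/
def inc : FreeGroup (Fin k) →* MappingTorus k φ :=
  (PresentedGroup.mk (mappingTorusRels k φ)).comp (FreeGroup.map Option.some)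

theorem inc_of (i : Fin k) : inc φ (FreeGroup.of i) = PresentedGroup.of (some i) := by
  rw [inc, MonoidHom.comp_apply, FreeGroup.map.of]; rfl

theorem stab_inc (W : FreeGroup (Fin k)) : stab φ * inc φ W * (stab φ)⁻¹ = inc φ (φ W) := by
  have h : (MulAut.conj (stab φ)).toMonoidHom.comp (inc φ) = (inc φ).comp φ := by
    ext1 i
    change stab φ * inc φ (FreeGroup.of i) * (stab φ)⁻¹ = inc φ (φ (FreeGroup.of i))
    have := PresentedGroup.one_of_mem (rels := mappingTorusRels k φ) ⟨i, rfl⟩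
    rw [map_mul, map_inv, mul_inv_eq_one] at this
    exact this
  exact DFunLike.congr_fun h W

theorem stab_pow_inc (n : ℕ) (W : FreeGroup (Fin k)) :
    stab φ ^ n * inc φ W = inc φ (φ^[n] W) * stab φ ^ n := by
  induction n generalizing W with
  | zero => simp
  | succ n ih =>
    rw [pow_succ, mul_assoc, mul_inv_eq_iff_eq_mul.1 (stab_inc φ W), ← mul_assoc, ih,
      Function.iterate_succ_apply, mul_assoc]

theorem freeFibre_eq : freeFibre k φ = (inc φ).range := by
  rw [MonoidHom.range_eq_map, ← FreeGroup.closure_range_of, MonoidHom.map_closure, freeFibre, ← Set.range_comp]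
  congr 2

theorem decomp (g : MappingTorus k φ) : ∃ (α : ℕ) (W : FreeGroup (Fin k)) (b : ℤ),
    g = (stab φ ^ α)⁻¹ * inc φ W * stab φ ^ b := by
  have hinc : ∀ (V : FreeGroup (Fin k)) (y : MappingTorus k φ), (∃ (α : ℕ) (W : FreeGroup (Fin k)) (b : ℤ),
      y = (stab φ ^ α)⁻¹ * inc φ W * stab φ ^ b) → (∃ (α : ℕ) (W : FreeGroup (Fin k)) (b : ℤ),
      inc φ V * y = (stab φ ^ α)⁻¹ * inc φ W * stab φ ^ b) := by
    rintro V y ⟨α, W, b, rfl⟩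
    refine ⟨α, φ^[α] V * W, b, ?_⟩
    have : inc φ V * (stab φ ^ α)⁻¹ = (stab φ ^ α)⁻¹ * inc φ (φ^[α] V) := by
      rw [mul_inv_eq_iff_eq_mul, mul_assoc, eq_inv_mul_iff_mul_eq, stab_pow_inc]
    rw [← mul_assoc, ← mul_assoc, this, map_mul]
    simp only [mul_assoc]
  have hg : g ∈ Subgroup.closure (Set.range (PresentedGroup.of (rels := mappingTorusRels k φ))) := by
    rw [PresentedGroup.closure_range_of]; trivial
  induction hg using Subgroup.closure_induction_left with
  | one => exact ⟨0, 1, 0, by simp⟩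
  | mul_left x hx y hy ih =>
    obtain ⟨_ | i, rfl⟩ := hx
    · obtain ⟨α, W, b, rfl⟩ := ih
      change ∃ (α' : ℕ) (W' : FreeGroup (Fin k)) (b' : ℤ), stab φ * _ = _
      rcases α with _ | α
      · refine ⟨0, φ W, 1 + b, ?_⟩
        rw [← stab_inc, zpow_add]
        simp [mul_assoc]
      · refine ⟨α, W, b, ?_⟩
        rw [pow_succ]
        simp [mul_assoc]
    · have := hinc (FreeGroup.of i) y ih
      rwa [inc_of] at this
  | inv_mul_cancel x hx y hy ih =>
    obtain ⟨_ | i, rfl⟩ := hx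
    · obtain ⟨α, W, b, rfl⟩ := ih
      change ∃ (α' : ℕ) (W' : FreeGroup (Fin k)) (b' : ℤ), (stab φ)⁻¹ * _ = _
      refine ⟨α + 1, W, b, ?_⟩
      rw [pow_succ]
      simp [mul_assoc]
    · have := hinc (FreeGroup.of i)⁻¹ y ih
      rwa [map_inv, inc_of] at this

theorem decomp_mul (m : ℕ) (hm : 1 ≤ m) (g : MappingTorus k φ) : ∃ (α : ℕ) (W : FreeGroup (Fin k)) (b : ℤ),
    g = (stab φ ^ (m * α))⁻¹ * inc φ W * stab φ ^ b := by
  obtain ⟨α, W, b, rfl⟩ := decomp φ g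
  obtain ⟨c, hc⟩ : ∃ c, m * α = α + c := ⟨m * α - α, by
    have : 1 * α ≤ m * α := Nat.mul_le_mul_right _ hm
    omega⟩
  refine ⟨α, φ^[c] W, c + b, ?_⟩
  rw [hc, add_comm α c, pow_add, zpow_add, zpow_natCast, mul_assoc _ (inc φ (φ^[c] W)), ← mul_assoc (inc φ (φ^[c] W)), ← stab_pow_inc]
  simp [mul_assoc]

/-- generic hom out of the mapping torus -/
theorem exists_lift {Q : Type*} [Group Q] (r : FreeGroup (Fin k) →* Q) (t : Q)
    (h : ∀ W, t * r W * t⁻¹ = r (φ W)) : 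
    ∃ Θ : MappingTorus k φ →* Q, (∀ W, Θ (inc φ W) = r W) ∧ Θ (stab φ) = t := by
  let f : Option (Fin k) → Q := fun o => o.elim t (fun i => r (FreeGroup.of i))
  have hf : ∀ W, FreeGroup.lift f (FreeGroup.map Option.some W) = r W := by
    intro W
    have : (FreeGroup.lift f).comp (FreeGroup.map Option.some) = r := by
      ext1 i
      simp [f]
    exact DFunLike.congr_fun this W
  have hrel : ∀ x ∈ mappingTorusRels k φ, FreeGroup.lift f x = 1 := by
    rintro x ⟨i, rfl⟩
    rw [map_mul, map_mul, map_mul, map_inv, map_inv, hf, hf, FreeGroup.lift_apply_of]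
    change t * _ * t⁻¹ * _ = 1
    rw [h, mul_inv_cancel]
  refine ⟨PresentedGroup.toGroup hrel, fun W => ?_, ?_⟩
  · exact hf W
  · exact PresentedGroup.toGroup.of hrel

theorem exists_eps : ∃ ε : MappingTorus k φ →* Multiplicative ℤ, (∀ W, ε (inc φ W) = 1) ∧
    ε (stab φ) = Multiplicative.ofAdd 1 := 
  exists_lift φ 1 (Multiplicative.ofAdd 1) (by simp)

theorem exists_Theta {R Z : Type*} [CommRing R] (ζ : Z → (Fin k × Fin 2 × Fin 2) → R) (τ : Equiv.Perm Z)
    (hζ : ∀ z, ζ (τ z) = pm (polyf φ) (ζ z)) (hg : ∀ z, good (ζ z)) :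
    ∃ Θ : MappingTorus k φ →* Equiv.Perm (Z × Matrix (Fin 2) (Fin 2) R),
      (∀ W z x, Θ (inc φ W) (z, x) = (z, gam (ζ z) W x)) ∧ 
      ∀ (b : ℤ) z x, (Θ (stab φ) ^ b) (z, x) = ((τ ^ (-b)) z, x) := by
  let r : FreeGroup (Fin k) →* Equiv.Perm (Z × Matrix (Fin 2) (Fin 2) R) := 
    { toFun W := Equiv.prodShear (Equiv.refl Z) (fun z => gam (ζ z) W)
      map_one' := by
        apply Equiv.ext
        rintro ⟨z, x⟩
        simp [Equiv.prodShear]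
      map_mul' := by
        intro U V
        apply Equiv.ext
        rintro ⟨z, x⟩
        simp [Equiv.prodShear] }
  let T : Equiv.Perm Z →* Equiv.Perm (Z × Matrix (Fin 2) (Fin 2) R) := 
    { toFun σ := Equiv.prodCongr σ (Equiv.refl _)
      map_one' := by
        apply Equiv.ext
        rintro ⟨z, x⟩
        simp
      map_mul' := by
        intro U V
        apply Equiv.ext
        rintro ⟨z, x⟩
        simp }
  obtain ⟨Θ, h1, h2⟩ := exists_lift φ r (T τ⁻¹) (by
    intro W
    apply Equiv.ext
    rintro ⟨z, x⟩
    rw [← map_inv, inv_inv]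
    change (τ⁻¹ (τ z), gam (ζ (τ z)) W x) = (z, gam (ζ z) (φ W) x)
    rw [hζ, gam_pm φ (hg z)]
    exact Prod.ext (τ.symm_apply_apply z) rfl)
  refine ⟨Θ, fun W z x => by rw [h1]; rfl, fun b z x => ?_⟩
  rw [h2, ← map_zpow, inv_zpow, ← zpow_neg]
  rfl

theorem rho_map {A B : Type*} [CommRing A] [CommRing B] (θ : A →+* B) {z : (Fin k × Fin 2 × Fin 2) → A} (hz : good z)
    (W : FreeGroup (Fin k)) : Units.map θ.mapMatrix.toMonoidHom (rho z W) = rho (fun q => θ (z q)) W := by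
  have hz' : good (fun q => θ (z q)) := by
    intro i
    rw [← mat_map]
    exact (hz i).map _
  have : (Units.map θ.mapMatrix.toMonoidHom).comp (rho z) = rho (fun q => θ (z q)) := by
    ext1 i
    apply Units.ext
    simp only [rho, MonoidHom.comp_apply, FreeGroup.lift_apply_of]
    rw [coe_ut hz', ← mat_map, ← coe_ut hz]
    rfl
  exact DFunLike.congr_fun this W

theorem conjHom_pow_eq {F R : Type*} [CommRing F] [CommRing R] (θ : R →+* F) (p n : ℕ) (hθ : ∀ x, θ x = 0 → (p : R) ∣ x)
    (hp : (p : R) ^ (n + 1) = 0) (u : (Matrix (Fin 2) (Fin 2) R)ˣ)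
    (hu : conjHom _ (Units.map θ.mapMatrix.toMonoidHom u) = 1) : conjHom _ u ^ p ^ n = 1 := by
  rw [conjHom_eq_one_iff] at hu
  obtain ⟨h1, h2, h3⟩ := hu
  change θ (u.1 0 1) = 0 at h1
  change θ (u.1 1 0) = 0 at h2
  change θ (u.1 0 0) = θ (u.1 1 1) at h3
  rw [← sub_eq_zero, ← map_sub] at h3
  obtain ⟨e1, h1⟩ := hθ _ h1
  obtain ⟨e2, h2⟩ := hθ _ h2
  obtain ⟨e3, h3⟩ := hθ _ h3
  set c := u.1 1 1 with hc
  let E : Matrix (Fin 2) (Fin 2) R := !![e3, e1; e2, 0]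
  have hE : u.1 = Polynomial.aeval E (Polynomial.C c + (p : Polynomial R) * Polynomial.X) := by
    rw [map_add, map_mul, Polynomial.aeval_C, Polynomial.aeval_X, map_natCast, ← nsmul_eq_mul, Algebra.algebraMap_eq_smul_one]
    ext i j
    fin_cases i <;> fin_cases j
    · simp [E, ← h3]
    · simp [E, ← h1]
    · simp [E, ← h2]
    · simp [E, hc]
  obtain ⟨q, hq⟩ := dvd_sub_pow_of_dvd_sub (p := p) (a := Polynomial.C c + (p : Polynomial R) * Polynomial.X) (b := Polynomial.C c)
    (by simp) n
  have hz : (p : Polynomial R) ^ (n + 1) = 0 := by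
    have := congrArg Polynomial.C hp
    rwa [map_pow, map_natCast, map_zero] at this
  rw [hz, zero_mul, sub_eq_zero] at hq
  have h5 := congrArg (Polynomial.aeval E) hq
  rw [map_pow, map_pow, ← hE, Polynomial.aeval_C, ← map_pow, Algebra.algebraMap_eq_smul_one] at h5
  rw [← map_pow, conjHom_smul (u ^ p ^ n) 1 (c ^ p ^ n) (by rw [Units.val_pow_eq_pow_val]; exact h5), map_one]

theorem good_lift {F R : Type*} [Field F] [Finite F] [CommRing R] (θ : R →+* F) (p n : ℕ) (hθ : ∀ x, θ x = 0 → (p : R) ∣ x)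
    (hp : (p : R) ^ (n + 1) = 0) (z : (Fin k × Fin 2 × Fin 2) → R) (hz : zev (fun q => θ (z q)) (D0 k) ≠ 0) : good z := by
  intro i
  rw [Matrix.isUnit_iff_isUnit_det]
  rw [← ringHom_zev, zev_D0, map_prod, Finset.prod_ne_zero_iff] at hz
  have h1 := hz i (Finset.mem_univ _)
  have := Fintype.ofFinite F
  have h2 := FiniteField.pow_card_sub_one_eq_one _ h1
  rw [← map_pow, ← sub_eq_zero, ← map_one θ, ← map_sub] at h2
  obtain ⟨e, he⟩ := hθ _ h2
  have h3 : IsNilpotent ((mat z i).det ^ (Fintype.card F - 1) - 1) := by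
    rw [he]
    exact ⟨n + 1, by rw [mul_pow, hp, zero_mul]⟩
  have h4 := h3.isUnit_add_one
  rw [sub_add_cancel] at h4
  have h5 : Fintype.card F - 1 ≠ 0 := by
    have := Fintype.one_lt_card (α := F)
    omega
  exact (isUnit_pow_iff h5).1 h4

theorem exists_rep {F R : Type} [Field F] [CommRing R] [Finite R] (θ : R →+* F) (a : (Fin k × Fin 2 × Fin 2) → F)
    (M : ℕ) (hM : 1 ≤ M) (hgood : ∀ z : (Fin k × Fin 2 × Fin 2) → R, 
      (∃ i, (fun q => θ (z q)) = (pm (polyf φ))^[i] a) → good z) : 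
    ∃ (Z : Type) (_ : Finite Z) (ζ : Z → (Fin k × Fin 2 × Fin 2) → R) (τ : Equiv.Perm Z) 
      (Θ : MappingTorus k φ →* Equiv.Perm (Z × Matrix (Fin 2) (Fin 2) R)),
      (∀ z, ∃ i, (fun q => θ (ζ z q)) = (pm (polyf φ))^[i] a) ∧ 
      (∀ y i, (fun q => θ (y q)) = (pm (polyf φ))^[i] a → (pm (polyf φ))^[M] y = y → ∃ z, ζ z = y) ∧
      τ ^ M = 1 ∧ 
      (∀ W z x, Θ (inc φ W) (z, x) = (z, gam (ζ z) W x)) ∧ 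
      ∀ (b : ℤ) z x, (Θ (stab φ) ^ b) (z, x) = ((τ ^ (-b)) z, x) := by
  let Z := {z : (Fin k × Fin 2 × Fin 2) → R // (∃ i, (fun q => θ (z q)) = (pm (polyf φ))^[i] a) ∧ (pm (polyf φ))^[M] z = z}
  have hmem : ∀ n (z : Z), (∃ i, (fun q => θ ((pm (polyf φ))^[n] z.1 q)) = (pm (polyf φ))^[i] a) ∧ 
      (pm (polyf φ))^[M] ((pm (polyf φ))^[n] z.1) = (pm (polyf φ))^[n] z.1 := by
    rintro n ⟨z, ⟨i, hi⟩, hz⟩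
    refine ⟨⟨n + i, ?_⟩, ?_⟩
    · rw [pm_iter_map, hi, ← Function.iterate_add_apply]
    · simp only
      rw [← Function.iterate_add_apply, add_comm, Function.iterate_add_apply, hz]
  let τ : Equiv.Perm Z := 
    { toFun z := ⟨(pm (polyf φ))^[1] z.1, hmem 1 z⟩
      invFun z := ⟨(pm (polyf φ))^[M - 1] z.1, hmem (M - 1) z⟩
      left_inv z := by
        apply Subtype.ext
        simp only
        rw [← Function.iterate_add_apply, Nat.sub_add_cancel hM, z.2.2]
      right_inv z := by
        apply Subtype.ext
        simp only
        rw [← Function.iterate_add_apply, Nat.add_sub_cancel' hM, z.2.2] }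
  have hτ : ∀ n (z : Z), ((τ ^ n) z).1 = (pm (polyf φ))^[n] z.1 := by
    intro n
    induction n with
    | zero => intro z; rfl
    | succ n ih =>
      intro z
      rw [pow_succ, Equiv.Perm.mul_apply, ih]
      rfl
  obtain ⟨Θ, h1, h2⟩ := exists_Theta φ (fun z : Z => z.1) τ (fun z => rfl) (fun z => hgood z.1 z.2.1)
  refine ⟨Z, inferInstance, fun z => z.1, τ, Θ, fun z => z.2.1, fun y i hi hy => ⟨⟨y, ⟨i, hi⟩, hy⟩, rfl⟩, ?_, h1, h2⟩
  apply Equiv.ext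
  intro z
  apply Subtype.ext
  rw [hτ, z.2.2]
  rfl
end Torus

section Final
variable {k : ℕ} (φ : FreeGroup (Fin k) →* FreeGroup (Fin k))

theorem Theta_decomp {R Z : Type*} [CommRing R] (ζ : Z → (Fin k × Fin 2 × Fin 2) → R) (τ : Equiv.Perm Z)
    (Θ : MappingTorus k φ →* Equiv.Perm (Z × Matrix (Fin 2) (Fin 2) R))
    (h1 : ∀ W z x, Θ (inc φ W) (z, x) = (z, gam (ζ z) W x))
    (h2 : ∀ (b : ℤ) z x, (Θ (stab φ) ^ b) (z, x) = ((τ ^ (-b)) z, x)) 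
    (α : ℕ) (W : FreeGroup (Fin k)) (b : ℤ) (z : Z) (x : Matrix (Fin 2) (Fin 2) R) :
    Θ ((stab φ ^ α)⁻¹ * inc φ W * stab φ ^ b) (z, x) = ((τ ^ ((α : ℤ) - b)) z, gam (ζ ((τ ^ (-b)) z)) W x) := by
  have e : (stab φ ^ α)⁻¹ = stab φ ^ (-(α : ℤ)) := by rw [zpow_neg, zpow_natCast]
  rw [e, map_mul, map_mul, map_zpow, map_zpow, Equiv.Perm.mul_apply, Equiv.Perm.mul_apply, h2, h1, h2, neg_neg,
    ← Equiv.Perm.mul_apply, ← zpow_add, sub_eq_add_neg]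

theorem eps_decomp (ε : MappingTorus k φ →* Multiplicative ℤ) (hε1 : ∀ W, ε (inc φ W) = 1)
    (hε2 : ε (stab φ) = Multiplicative.ofAdd 1) (α : ℕ) (W : FreeGroup (Fin k)) (b : ℤ) :
    (ε ((stab φ ^ α)⁻¹ * inc φ W * stab φ ^ b)).toAdd = b - α := by
  have h : ε ((stab φ ^ α)⁻¹ * inc φ W * stab φ ^ b) = (Multiplicative.ofAdd (1 : ℤ) ^ α)⁻¹ * 1 * Multiplicative.ofAdd (1 : ℤ) ^ b := by
    rw [MonoidHom.map_mul, MonoidHom.map_mul, MonoidHom.map_inv, MonoidHom.map_pow, MonoidHom.map_zpow, hε1, hε2]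
  rw [h, toAdd_mul, toAdd_mul, toAdd_inv, toAdd_pow, toAdd_zpow, toAdd_one]
  simp
  ring

theorem resid_of_hom {H Q : Type} [Group H] [Group Q] [Finite Q] (p : ℕ) (f : H →* Q) 
    (hf : ∀ h, ∃ s : ℕ, f h ^ p ^ s = 1) (g : H) (hg : f g ≠ 1) :
    ∃ (Q : Type) (_ : Group Q) (_ : Fintype Q) (f : H →* Q),
    Function.Surjective f ∧ IsPGroup p Q ∧ f g ≠ 1 := by
  refine ⟨f.range, inferInstance, Fintype.ofFinite _, f.rangeRestrict, f.rangeRestrict_surjective, ?_, ?_⟩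
  · rintro ⟨_, h, rfl⟩
    obtain ⟨s, hs⟩ := hf h
    exact ⟨s, Subtype.ext hs⟩
  · intro h
    exact hg (congrArg Subtype.val h)

/-- everything arithmetic, packaged as group theory -/
theorem core (hφ : Function.Injective φ) (ε : MappingTorus k φ →* Multiplicative ℤ) (hε1 : ∀ W, ε (inc φ W) = 1)
    (hε2 : ε (stab φ) = Multiplicative.ofAdd 1) :
    ∃ Nbd : ℕ, ∀ p : ℕ, p.Prime → Nbd < p → ∃ (Q0 : Type) (_ : Group Q0) (_ : Finite Q0) (Θ0 : MappingTorus k φ →* Q0)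
      (m : ℕ), 1 ≤ m ∧ Θ0 (stab φ ^ m) = 1 ∧ ∀ W, W ≠ 1 → ∃ (Q : Type) (_ : Group Q) (_ : Finite Q)
        (Θ : MappingTorus k φ →* Q), Θ (inc φ W) ≠ 1 ∧ ∀ g, Θ0 g = 1 → (m : ℤ) ∣ (ε g).toAdd → 
          ∃ s : ℕ, Θ g ^ p ^ s = 1 := by
  obtain ⟨n0, Nbd, H⟩ := arith (polyf φ) (D0 k) (D0_ne φ _)
  refine ⟨Nbd, fun p hp hlt => ?_⟩
  obtain ⟨F, _, _, hchar, a, m, hm1, hma, hD, hsep⟩ := H p hp hlt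
  have hp0 : ((p : ℕ) : F) ^ (0 + 1) = 0 := by simp
  obtain ⟨Z0, _, ζ0, τ0, Θ0, hZ0a, hZ0b, hτ0, hThA, hThB⟩ := exists_rep φ (RingHom.id F) a m hm1 (by
    rintro z ⟨i, hi⟩
    refine good_lift (RingHom.id F) p 0 (fun x hx => ?_) hp0 z ?_
    · rw [RingHom.id_apply] at hx
      rw [hx]; exact dvd_zero _
    · rw [hi]; exact hD i)
  refine ⟨_, inferInstance, inferInstance, Θ0, m, hm1, ?_, fun W hW => ?_⟩
  · apply Equiv.ext
    rintro ⟨z, x⟩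
    have := hThB m z x
    rw [zpow_natCast] at this
    rw [map_pow, this, zpow_neg, zpow_natCast, hτ0, inv_one]
    rfl
  obtain ⟨g0, hg0, hg0'⟩ := exists_sep φ hφ n0 W hW
  obtain ⟨n, R, _, _, θ, y, hθ, hpR, hya, hy, hyg⟩ := hsep g0 hg0
  have hgoodR : ∀ z : (Fin k × Fin 2 × Fin 2) → R, (∃ i, (fun q => θ (z q)) = (pm (polyf φ))^[i] a) → good z := by
    rintro z ⟨i, hi⟩
    refine good_lift θ p n hθ hpR z ?_
    rw [hi]; exact hD i
  obtain ⟨Z, _, ζ, τ, Θ, hZa, hZb, hτ, hΘa, hΘb⟩ := exists_rep φ θ a (m * p ^ n) 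
    (Nat.mul_pos hm1 (pow_pos hp.pos n)) hgoodR
  refine ⟨_, inferInstance, inferInstance, Θ, ?_, ?_⟩
  · intro h
    obtain ⟨z, hz⟩ := hZb y 0 (funext hya) hy
    refine hg0' y (hgoodR y ⟨0, funext hya⟩) hyg ?_
    apply Equiv.ext
    intro x
    have h1 := hΘa W z x
    rw [h, hz] at h1
    exact (congrArg Prod.snd h1).symm
  · intro g hg hmg
    refine ⟨n + n, ?_⟩
    obtain ⟨α, V, b, hd⟩ := decomp φ (g ^ p ^ n)
    have hg1 : Θ0 (g ^ p ^ n) = 1 := by rw [map_pow, hg, one_pow]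
    have hb : ((m * p ^ n : ℕ) : ℤ) ∣ b - α := by
      have h1 : (ε (g ^ p ^ n)).toAdd = b - α := by
        rw [hd, eps_decomp φ ε hε1 hε2]
      rw [← h1, map_pow, toAdd_pow, nsmul_eq_mul, Nat.cast_mul, mul_comm (m : ℤ)]
      exact mul_dvd_mul (dvd_refl _) hmg
    have hτ1 : τ ^ ((α : ℤ) - b) = 1 := by
      obtain ⟨c, hc⟩ := hb
      have : (α : ℤ) - b = ((m * p ^ n : ℕ) : ℤ) * (-c) := by linarith
      rw [this, zpow_mul, zpow_natCast, hτ, one_zpow]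
    have hV0 : ∀ z0, gam (ζ0 z0) V = 1 := by
      intro z0
      apply Equiv.ext
      intro x
      have h1 := Theta_decomp φ ζ0 τ0 Θ0 hThA hThB α V b ((τ0 ^ b) z0) x
      rw [← hd, hg1, ← Equiv.Perm.mul_apply (τ0 ^ (-b)), ← zpow_add, neg_add_cancel, zpow_zero] at h1
      exact (congrArg Prod.snd h1).symm
    have hV : ∀ z, gam (ζ z) V ^ p ^ n = 1 := by
      intro z
      refine conjHom_pow_eq θ p n hθ hpR (rho (ζ z) V) ?_
      rw [rho_map θ (hgoodR _ (hZa z))]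
      obtain ⟨i, hi⟩ := hZa z
      obtain ⟨z0, hz0⟩ := hZ0b ((pm (polyf φ))^[i] a) i rfl (by
        rw [← Function.iterate_add_apply, add_comm, Function.iterate_add_apply, hma])
      rw [hi, ← hz0]
      exact hV0 z0
    have hj : ∀ j z x, (Θ (g ^ p ^ n) ^ j) (z, x) = (z, (gam (ζ ((τ ^ (-b)) z)) V ^ j) x) := by
      intro j
      induction j with
      | zero => intro z x; rfl
      | succ j ih =>
        intro z x
        have h1 := Theta_decomp φ ζ τ Θ hΘa hΘb α V b z x
        rw [← hd, hτ1] at h1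
        rw [pow_succ, Equiv.Perm.mul_apply, h1, Equiv.Perm.one_apply, ih, pow_succ, Equiv.Perm.mul_apply]
    rw [pow_add, pow_mul, ← map_pow]
    apply Equiv.ext
    rintro ⟨z, x⟩
    rw [hj, hV]
    rfl

theorem main_aux (hφ : Function.Injective φ) : 
    ∃ Nbd : ℕ, ∀ p : ℕ, p.Prime → p > Nbd →
      ∃ N : Subgroup (MappingTorus k φ), N.FiniteIndex ∧ ResiduallyFiniteP p ↥N ∧
        ∃ m : ℕ, 1 ≤ m ∧
          (∀ g ∈ freeFibre k φ ⊓ N, stab φ ^ m * g * (stab φ ^ m)⁻¹ ∈ freeFibre k φ ⊓ N) ∧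
          N = Subgroup.closure ((↑(freeFibre k φ ⊓ N) : Set (MappingTorus k φ)) ∪ {stab φ ^ m}) ∧
          IsFreeGroup ↥(freeFibre k φ ⊓ N) := by
  obtain ⟨ε, hε1, hε2⟩ := exists_eps φ
  obtain ⟨Nbd, H⟩ := core φ hφ ε hε1 hε2
  refine ⟨Nbd, fun p hp hlt => ?_⟩
  obtain ⟨Q0, _, _, Θ0, m, hm1, hΘt, hsep⟩ := H p hp hlt
  have : NeZero m := ⟨by omega⟩
  let δ : MappingTorus k φ →* Multiplicative (ZMod m) := (AddMonoidHom.toMultiplicative (Int.castAddHom (ZMod m))).comp ε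
  have hδ : ∀ g, δ g = 1 ↔ (m : ℤ) ∣ (ε g).toAdd := by
    intro g
    rw [← ZMod.intCast_zmod_eq_zero_iff_dvd]
    rfl
  have : Finite (Multiplicative (ZMod m)) := inferInstanceAs (Finite (ZMod m))
  let N : Subgroup (MappingTorus k φ) := (Θ0.prod δ).ker
  have hN : ∀ g, g ∈ N ↔ Θ0 g = 1 ∧ (m : ℤ) ∣ (ε g).toAdd := by
    intro g
    rw [← hδ, MonoidHom.mem_ker, MonoidHom.prod_apply, Prod.mk_eq_one]
  have htN : stab φ ^ m ∈ N := by
    rw [hN]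
    refine ⟨hΘt, ?_⟩
    rw [map_pow, hε2, toAdd_pow]
    simp
  have hinj : Function.Injective (inc φ) := by
    rw [injective_iff_map_eq_one]
    intro W hW
    by_contra hne
    obtain ⟨Q, _, _, Θ, h1, -⟩ := hsep W hne
    rw [hW, map_one] at h1
    exact h1 rfl
  refine ⟨N, inferInstance, ?_, m, hm1, ?_, ?_, ?_⟩
  · rintro ⟨g, hgN⟩ hg
    have hg' : g ≠ 1 := fun h => hg (Subtype.ext h)
    by_cases hε : (ε g).toAdd = 0
    · obtain ⟨α, W, b, hd⟩ := decomp φ g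
      have hab : b = α := by
        have h1 : (ε g).toAdd = b - α := by
          rw [hd, eps_decomp φ ε hε1 hε2]
        linarith
      have hW : W ≠ 1 := by
        rintro rfl
        apply hg'
        rw [hd, hab, map_one, zpow_natCast, mul_one, inv_mul_cancel]
      obtain ⟨Q, _, _, Θ, h1, h2⟩ := hsep W hW
      refine resid_of_hom p (Θ.comp N.subtype) ?_ _ ?_
      · rintro ⟨h, hh⟩
        have := (hN h).1 hh
        exact h2 h this.1 this.2
      · intro h
        apply h1
        change Θ g = 1 at h
        rw [hd, hab, map_mul, map_mul, zpow_natCast, map_inv, mul_assoc, inv_mul_eq_one, eq_comm, mul_eq_right] at h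
        exact h
    · have : NeZero p := ⟨hp.ne_zero⟩
      set s := (ε g).toAdd.natAbs with hs
      have : NeZero (p ^ s) := ⟨pow_ne_zero _ hp.ne_zero⟩
      have : Finite (Multiplicative (ZMod (p ^ s))) := inferInstanceAs (Finite (ZMod (p ^ s)))
      refine resid_of_hom p ((AddMonoidHom.toMultiplicative (Int.castAddHom (ZMod (p ^ s)))).comp (ε.comp N.subtype)) ?_ _ ?_
      · intro h
        refine ⟨s, ?_⟩
        have := pow_card_eq_one' (x := (AddMonoidHom.toMultiplicative (Int.castAddHom (ZMod (p ^ s)))).comp (ε.comp N.subtype) h)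
        rwa [Nat.card_congr Multiplicative.toAdd, Nat.card_zmod] at this
      · intro h
        have h1 : (((ε g).toAdd : ℤ) : ZMod (p ^ s)) = 0 := h
        rw [ZMod.intCast_zmod_eq_zero_iff_dvd, Int.natCast_dvd] at h1
        have h2 := Nat.le_of_dvd (Int.natAbs_pos.2 hε) h1
        have h3 := Nat.lt_pow_self hp.one_lt (n := s)
        omega
  · rintro g ⟨hg1, hg2⟩
    refine ⟨?_, (MonoidHom.normal_ker (Θ0.prod δ)).conj_mem g hg2 _⟩
    rw [freeFibre_eq] at hg1 ⊢
    obtain ⟨W, rfl⟩ := hg1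
    exact ⟨φ^[m] W, by rw [stab_pow_inc, mul_inv_cancel_right]⟩
  · apply le_antisymm
    · intro g hg
      obtain ⟨α, W, b, hd⟩ := decomp_mul φ m hm1 g
      have h1 : (ε g).toAdd = b - m * α := by
        rw [hd, eps_decomp φ ε hε1 hε2, Nat.cast_mul]
      have h2 := ((hN g).1 hg).2
      rw [h1] at h2
      obtain ⟨c, hc⟩ : (m : ℤ) ∣ b := (dvd_sub_left (dvd_mul_right _ _)).1 h2
      rw [hc, pow_mul, zpow_mul, zpow_natCast] at hd
      have hW : inc φ W ∈ N := by
        have : inc φ W = (stab φ ^ m) ^ α * g * ((stab φ ^ m) ^ c)⁻¹ := by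
          rw [hd]; simp [mul_assoc]
        rw [this]
        exact N.mul_mem (N.mul_mem (N.pow_mem htN _) hg) (N.inv_mem (N.zpow_mem htN _))
      have ht : stab φ ^ m ∈ Subgroup.closure ((↑(freeFibre k φ ⊓ N) : Set (MappingTorus k φ)) ∪ {stab φ ^ m}) :=
        Subgroup.subset_closure (Or.inr rfl)
      rw [hd]
      refine Subgroup.mul_mem _ (Subgroup.mul_mem _ (Subgroup.inv_mem _ (Subgroup.pow_mem _ ht _)) ?_) (Subgroup.zpow_mem _ ht _)
      refine Subgroup.subset_closure (Or.inl ⟨?_, hW⟩)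
      rw [freeFibre_eq]
      exact ⟨W, rfl⟩
    · rw [Subgroup.closure_le]
      rintro g (hg | hg)
      · exact hg.2
      · rw [Set.mem_singleton_iff.1 hg]; exact htN
  · rw [freeFibre_eq, ← Subgroup.map_comap_eq]
    exact IsFreeGroup.ofMulEquiv ((N.comap (inc φ)).equivMapOfInjective (inc φ) hinj)
end Final

/-- For every sufficiently large prime `p`, the mapping torus of an injective endomorphism of a
finitely generated free group has a finite index subgroup `N` that is residually (finite `p`)
and that is itself an ascending HNN extension of a free group: `N` is generated by `F_k ∩ N`
together with `t₁ = t^m` for some `m ≥ 1`, with `t₁ (F_k ∩ N) t₁⁻¹ ⊆ F_k ∩ N` and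
`F_k ∩ N` free. -/
theorem mappingTorus_virtually_residually_p_ascending_hnn (k : ℕ)
    (φ : FreeGroup (Fin k) →* FreeGroup (Fin k)) (hφ : Function.Injective φ) :
    ∃ Nbd : ℕ, ∀ p : ℕ, p.Prime → p > Nbd →
      ∃ N : Subgroup (MappingTorus k φ), N.FiniteIndex ∧ ResiduallyFiniteP p ↥N ∧
        ∃ m : ℕ, 1 ≤ m ∧
          (∀ g ∈ freeFibre k φ ⊓ N,
              (PresentedGroup.of (none : Option (Fin k))) ^ m * g *
                ((PresentedGroup.of (none : Option (Fin k))) ^ m)⁻¹ ∈ freeFibre k φ ⊓ N) ∧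
          N = Subgroup.closure
              ((↑(freeFibre k φ ⊓ N) : Set (MappingTorus k φ)) ∪
                {(PresentedGroup.of (none : Option (Fin k))) ^ m}) ∧
          IsFreeGroup ↥(freeFibre k φ ⊓ N) := by
  exact main_aux φ hφ
end

section
/- Let 𝔽 be a field and let M = (M₁,…,Mₙ) be a polynomial self-map of affine n-space over 𝔽. Let I ⊆ 𝔽[x₁,…,xₙ] be the kernel of the induced ring endomorphism M* (f ↦ f∘M), and let T = (∂M_i/∂x_j) be the formal Jacobian matrix of M, viewed as an n×n matrix over the rational function field 𝔽(x₁,…,xₙ). If M is separable (i.e. the field 𝔽(x₁,…,xₙ) is a separable extension of its subfield 𝔽(M₁,…,Mₙ), the function field of the closure of the image of M), then the Krull dimension of the ring 𝔽[x₁,…,xₙ]/I equals the rank of the matrix T over 𝔽(x₁,…,xₙ). -/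
open MvPolynomial

noncomputable section

/-- The function field `𝔽(x₁,…,xₙ)` of affine `n`-space over `𝔽`. -/
abbrev FunctionField' (𝔽 : Type*) [Field 𝔽] (n : ℕ) : Type _ :=
  FractionRing (MvPolynomial (Fin n) 𝔽)

/-- The subfield `𝔽(M₁,…,Mₙ)` of `𝔽(x₁,…,xₙ)` generated by the constants and the
components of a polynomial self-map `M`. -/
def imageField (𝔽 : Type*) [Field 𝔽] (n : ℕ) (M : Fin n → MvPolynomial (Fin n) 𝔽) :
    Subfield (FunctionField' 𝔽 n) :=
  Subfield.closure
    ((Set.range fun c : 𝔽 => algebraMap (MvPolynomial (Fin n) 𝔽) (FunctionField' 𝔽 n) (C c)) ∪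
      (Set.range fun i : Fin n =>
        algebraMap (MvPolynomial (Fin n) 𝔽) (FunctionField' 𝔽 n) (M i)))

/-- `𝔽(x₁,…,xₙ)` is a separable (i.e. separably generated) extension of `𝔽(M₁,…,Mₙ)`:
there is a transcendence basis `s` over which the extension is separably algebraic. -/
def SeparableSelfMap (𝔽 : Type*) [Field 𝔽] (n : ℕ)
    (M : Fin n → MvPolynomial (Fin n) 𝔽) : Prop :=
  ∃ s : Set (FunctionField' 𝔽 n),
    AlgebraicIndependent ↥(imageField 𝔽 n M) ((↑) : s → FunctionField' 𝔽 n) ∧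
    Algebra.IsSeparable ↥(IntermediateField.adjoin ↥(imageField 𝔽 n M) s)
      (FunctionField' 𝔽 n)

theorem aux_krullDim_integral (R S : Type*) [CommRing R] [CommRing S] [Algebra R S]
    [Algebra.IsIntegral R S] (hinj : Function.Injective (algebraMap R S)) :
    ringKrullDim R = ringKrullDim S := by
  apply le_antisymm
  · unfold ringKrullDim Order.krullDim
    apply iSup_le
    intro l
    obtain ⟨Q, -, hQ, hQ'⟩ := Ideal.exists_ideal_over_prime_of_isIntegral (S := S)
      (RelSeries.head l).asIdeal ⊥ (by
        rw [← RingHom.ker_eq_comap_bot, (RingHom.injective_iff_ker_eq_bot _).1 hinj]; exact bot_le)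
    have : Q.LiesOver (RelSeries.head l).asIdeal := ⟨hQ'.symm⟩
    have : Algebra.HasGoingUp R S := inferInstance
    obtain ⟨L, hL, -⟩ := Ideal.exists_ltSeries_of_hasGoingUp l Q
    rw [← hL]
    exact le_iSup (fun p : LTSeries (PrimeSpectrum S) => (p.length : WithBot ℕ∞)) L
  · refine Order.krullDim_le_of_strictMono (PrimeSpectrum.comap (algebraMap R S)) ?_
    intro I J h
    exact Ideal.IsIntegral.comap_lt_comap (R := R) (I := I.asIdeal) (J := J.asIdeal) h

theorem aux_krullDim_trdeg (F A : Type*) [Field F] [CommRing A] [IsDomain A] [Algebra F A]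
    [Algebra.FiniteType F A] :
    ∃ r : ℕ, ringKrullDim A = r ∧ Algebra.trdeg F A = r := by
  obtain ⟨r, g, hg, hi⟩ := exists_integral_inj_algHom_of_fg F A
  refine ⟨r, ?_, ?_⟩
  · algebraize [g.toRingHom]
    have : Algebra.IsIntegral (MvPolynomial (Fin r) F) A := ⟨hi⟩
    rw [← aux_krullDim_integral (MvPolynomial (Fin r) F) A hg]
    simp
  · algebraize [g.toRingHom]
    have : Algebra.IsIntegral (MvPolynomial (Fin r) F) A := ⟨hi⟩
    have : FaithfulSMul (MvPolynomial (Fin r) F) A :=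
      (faithfulSMul_iff_algebraMap_injective _ _).2 hg
    have h := lift_trdeg_add_eq F (MvPolynomial (Fin r) F) A
    rw [trdeg_eq_zero (R := MvPolynomial (Fin r) F) (A := A)] at h
    simp at h
    exact h.symm

open scoped IntermediateField.algebraAdjoinAdjoin in
theorem aux_finrank_sep (K L : Type*) [Field K] [Field L] [Algebra K L] (s : Set L)
    (hs : AlgebraicIndependent K ((↑) : s → L))
    (hsep : Algebra.IsSeparable (IntermediateField.adjoin K s) L) :
    Module.rank L (Ω[L⁄K]) = Cardinal.mk s ∧ Algebra.trdeg K L = Cardinal.mk s := by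
  have hr : Set.range ((↑) : s → L) = s := Subtype.range_coe
  set S := Algebra.adjoin K s with hS
  have e0 : MvPolynomial s K ≃ₐ[K] S := hs.aevalEquiv.trans (Subalgebra.equivOfEq _ _ (by rw [hr]))
  have h1 : Algebra.FormallyEtale S (IntermediateField.adjoin K s) :=
    .of_isLocalization (nonZeroDivisors _)
  have h2 : Algebra.FormallyEtale (IntermediateField.adjoin K s) L :=
    Algebra.FormallyEtale.of_isSeparable _ L
  have h3 : Algebra.FormallyEtale S L := .comp _ (IntermediateField.adjoin K s) _
  have halg : Algebra.IsAlgebraic S (IntermediateField.adjoin K s) :=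
    IsLocalization.isAlgebraic _ (nonZeroDivisors S)
  have halg2 : Algebra.IsAlgebraic S L := .trans S (IntermediateField.adjoin K s) L
  constructor
  · let _ : Algebra (MvPolynomial s K) S := e0.toAlgHom.toRingHom.toAlgebra
    let _ : Algebra (MvPolynomial s K) L :=
      ((algebraMap S L).comp e0.toAlgHom.toRingHom).toAlgebra
    have : IsScalarTower (MvPolynomial s K) S L := .of_algebraMap_eq fun _ => rfl
    have : IsScalarTower K (MvPolynomial s K) L := .of_algebraMap_eq fun x => by
      change _ = algebraMap S L (e0 (algebraMap K _ x))
      rw [e0.commutes]; rfl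
    let e1 : MvPolynomial s K ≃ₐ[MvPolynomial s K] S :=
      AlgEquiv.ofRingEquiv (f := e0.toRingEquiv) (fun _ => rfl)
    have h4 : Algebra.FormallyEtale (MvPolynomial s K) S := .of_equiv e1
    have h5 : Algebra.FormallyEtale (MvPolynomial s K) L := .comp _ S _
    let b := ((KaehlerDifferential.mvPolynomialBasis K s).baseChange L).map
      (KaehlerDifferential.tensorKaehlerEquivOfFormallyEtale K (MvPolynomial s K) L)
    exact b.mk_eq_rank''.symm
  · have : IsTranscendenceBasis K ((↑) : s → L) := by
      rw [hs.isTranscendenceBasis_iff_isAlgebraic, hr]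
      exact halg2
    exact this.cardinalMk_eq_trdeg.symm

theorem aux_ker (F L ι : Type*) [Field F] [Field L] [Algebra F L] (m : ι → L) :
    LinearMap.ker (KaehlerDifferential.map F (IntermediateField.adjoin F (Set.range m)) L L) =
      Submodule.span L (Set.range fun i => KaehlerDifferential.D F L (m i)) := by
  apply le_antisymm
  · rw [← KaehlerDifferential.range_mapBaseChange]
    have key : ∀ x ∈ IntermediateField.adjoin F (Set.range m), KaehlerDifferential.D F L x ∈
        Submodule.span L (Set.range fun i => KaehlerDifferential.D F L (m i)) := by
      intro x hx
      induction hx using IntermediateField.adjoin_induction with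
      | mem x hx =>
        obtain ⟨i, rfl⟩ := hx
        exact Submodule.subset_span ⟨i, rfl⟩
      | algebraMap x => simp
      | add x y _ _ hx hy => rw [map_add]; exact add_mem hx hy
      | inv x _ hx =>
        rw [Derivation.leibniz_inv]
        exact Submodule.smul_mem _ _ hx
      | mul x y _ _ hx hy =>
        rw [Derivation.leibniz]
        exact add_mem (Submodule.smul_mem _ _ hy) (Submodule.smul_mem _ _ hx)
    rintro _ ⟨x, rfl⟩
    induction x with
    | zero => simp
    | add x y hx hy => rw [map_add]; exact add_mem hx hy
    | tmul r y =>
      rw [KaehlerDifferential.mapBaseChange_tmul]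
      apply Submodule.smul_mem
      obtain ⟨y, rfl⟩ := KaehlerDifferential.linearCombination_surjective _ _ y
      rw [Finsupp.linearCombination_apply, Finsupp.sum, map_sum]
      refine sum_mem fun c _ => ?_
      rw [map_smul, KaehlerDifferential.map_D, ← algebraMap_smul L]
      exact Submodule.smul_mem _ _ (key _ c.2)
  · rw [Submodule.span_le]
    rintro _ ⟨i, rfl⟩
    rw [SetLike.mem_coe, LinearMap.mem_ker, KaehlerDifferential.map_D]
    exact Derivation.map_algebraMap _
      (⟨m i, IntermediateField.subset_adjoin _ _ ⟨i, rfl⟩⟩ : IntermediateField.adjoin F (Set.range m))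

theorem aux_rank (F : Type*) [Field F] (n : ℕ) (M : Fin n → MvPolynomial (Fin n) F) :
    Module.finrank (FunctionField' F n) (Ω[FunctionField' F n⁄F]) = n ∧
    Module.Finite (FunctionField' F n) (Ω[FunctionField' F n⁄F]) ∧
    (Matrix.of fun i j : Fin n =>
        algebraMap (MvPolynomial (Fin n) F) (FunctionField' F n)
          (pderiv j (M i))).rank = Module.finrank (FunctionField' F n)
      (Submodule.span (FunctionField' F n) (Set.range fun i =>
        KaehlerDifferential.D F (FunctionField' F n) 
          (algebraMap (MvPolynomial (Fin n) F) (FunctionField' F n) (M i)))) := by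
  have h5 : Algebra.FormallyEtale (MvPolynomial (Fin n) F) (FunctionField' F n) :=
    .of_isLocalization (nonZeroDivisors _)
  let e := KaehlerDifferential.tensorKaehlerEquivOfFormallyEtale F (MvPolynomial (Fin n) F)
    (FunctionField' F n)
  let b := ((KaehlerDifferential.mvPolynomialBasis F (Fin n)).baseChange (FunctionField' F n)).map e
  refine ⟨by simp [Module.finrank_eq_card_basis b], Module.Finite.of_basis b, ?_⟩
  rw [Matrix.rank_eq_finrank_span_row, ← LinearEquiv.finrank_map_eq b.equivFun, Submodule.map_span,
    ← Set.range_comp]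
  have hfun : (Matrix.of fun i j : Fin n =>
      algebraMap (MvPolynomial (Fin n) F) (FunctionField' F n) (pderiv j (M i))).row =
      (b.equivFun : Ω[FunctionField' F n⁄F] → (Fin n → FunctionField' F n)) ∘ fun i =>
        KaehlerDifferential.D F (FunctionField' F n)
          (algebraMap (MvPolynomial (Fin n) F) (FunctionField' F n) (M i)) := by
    funext i j
    simp only [Matrix.row, Matrix.of_apply, Function.comp,
      Module.Basis.equivFun_apply, b, Module.Basis.map_repr, LinearEquiv.trans_apply, e,
      KaehlerDifferential.tensorKaehlerEquivOfFormallyEtale_symm_D_algebraMap]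
    rw [Module.Basis.baseChange_repr_tmul, KaehlerDifferential.mvPolynomialBasis_repr_apply,
      Algebra.smul_def, mul_one]
  rw [hfun]
  rfl

open scoped IntermediateField.algebraAdjoinAdjoin in
theorem aux_main (F : Type*) [Field F] (n : ℕ) (M : Fin n → MvPolynomial (Fin n) F)
    (K : IntermediateField F (FunctionField' F n))
    (hK : K = IntermediateField.adjoin F (Set.range fun i =>
      algebraMap (MvPolynomial (Fin n) F) (FunctionField' F n) (M i)))
    (s : Set (FunctionField' F n))
    (hs : AlgebraicIndependent K ((↑) : s → FunctionField' F n))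
    (hsep : Algebra.IsSeparable (IntermediateField.adjoin K s) (FunctionField' F n)) :
    ringKrullDim (MvPolynomial (Fin n) F ⧸
        RingHom.ker (MvPolynomial.aeval M :
          MvPolynomial (Fin n) F →ₐ[F] MvPolynomial (Fin n) F)) =
      ((Matrix.of fun i j : Fin n =>
        algebraMap (MvPolynomial (Fin n) F) (FunctionField' F n)
          (pderiv j (M i))).rank : ℕ) := by
  subst hK
  set m : Fin n → FunctionField' F n := fun i =>
      algebraMap (MvPolynomial (Fin n) F) (FunctionField' F n) (M i) with hm
  obtain ⟨hn, hfin, hrank⟩ := aux_rank F n M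
  obtain ⟨hΩ, htr⟩ := aux_finrank_sep _ _ s hs hsep
  -- the coordinate ring of the image
  let A := Algebra.adjoin F (Set.range m)
  have hft : Algebra.FiniteType F A :=
    (Subalgebra.fg_iff_finiteType _).1 (Subalgebra.fg_def.2 ⟨_, Set.finite_range m, rfl⟩)
  obtain ⟨r, hr, hr'⟩ := aux_krullDim_trdeg F A
  have hker : RingHom.ker (MvPolynomial.aeval M :
          MvPolynomial (Fin n) F →ₐ[F] MvPolynomial (Fin n) F) =
      RingHom.ker (MvPolynomial.aeval m :
          MvPolynomial (Fin n) F →ₐ[F] FunctionField' F n) := by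
    have hcomp : (MvPolynomial.aeval m : MvPolynomial (Fin n) F →ₐ[F] FunctionField' F n) =
        (IsScalarTower.toAlgHom F (MvPolynomial (Fin n) F) (FunctionField' F n)).comp
          (MvPolynomial.aeval M) := by
      ext i; simp [hm]
    ext p
    rw [RingHom.mem_ker, RingHom.mem_ker, hcomp, AlgHom.comp_apply,
      IsScalarTower.coe_toAlgHom', FaithfulSMul.algebraMap_eq_zero_iff]
  have hdim : ringKrullDim (MvPolynomial (Fin n) F ⧸
        RingHom.ker (MvPolynomial.aeval M :
          MvPolynomial (Fin n) F →ₐ[F] MvPolynomial (Fin n) F)) = ringKrullDim A := by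
    rw [hker]
    refine ringKrullDim_eq_of_ringEquiv ((Ideal.quotientKerEquivRange
      (MvPolynomial.aeval m : MvPolynomial (Fin n) F →ₐ[F] FunctionField' F n)).trans
      (Subalgebra.equivOfEq _ _ ?_)).toRingEquiv
    exact (Algebra.adjoin_range_eq_range_aeval F m).symm
  -- transcendence degrees
  have halg : Algebra.IsAlgebraic A (IntermediateField.adjoin F (Set.range m)) :=
    IsLocalization.isAlgebraic _ (nonZeroDivisors A)
  have ht1 := trdeg_add_eq F A (A := IntermediateField.adjoin F (Set.range m))
  rw [trdeg_eq_zero (R := A), add_zero, hr'] at ht1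
  have ht2 := trdeg_add_eq F (IntermediateField.adjoin F (Set.range m)) (A := FunctionField' F n)
  have ht3 := trdeg_add_eq F (MvPolynomial (Fin n) F) (A := FunctionField' F n)
  have halg' : Algebra.IsAlgebraic (MvPolynomial (Fin n) F) (FunctionField' F n) :=
    IsLocalization.isAlgebraic _ (nonZeroDivisors (MvPolynomial (Fin n) F))
  rw [trdeg_eq_zero (R := MvPolynomial (Fin n) F), add_zero] at ht3
  rw [← ht3, ← ht1, htr] at ht2
  simp only [MvPolynomial.trdeg_of_isDomain, Cardinal.mk_fin, Cardinal.lift_natCast] at ht2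
  -- differentials
  have hrn := LinearMap.finrank_range_add_finrank_ker
    (KaehlerDifferential.map F (IntermediateField.adjoin F (Set.range m))
      (FunctionField' F n) (FunctionField' F n))
  rw [LinearMap.range_eq_top.2 (KaehlerDifferential.map_surjective _ _ _), finrank_top, hn,
    aux_ker, ← hrank, Module.finrank, hΩ] at hrn
  have ht4 := congrArg Cardinal.toNat ht2
  have hlt : Cardinal.mk s < Cardinal.aleph0 := by
    refine lt_of_le_of_lt (le_add_self) (ht2.trans_lt (Cardinal.natCast_lt_aleph0))
  rw [Cardinal.toNat_add Cardinal.natCast_lt_aleph0 hlt, Cardinal.toNat_natCast,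
    Cardinal.toNat_natCast] at ht4
  rw [hdim, hr]
  congr 1
  omega

/-- If the polynomial self-map `M` of affine `n`-space over a field `𝔽` is separable, then the
Krull dimension of `𝔽[x₁,…,xₙ]/I`, where `I = ker M*` is the vanishing ideal of the closure of
the image of `M`, equals the rank of the formal Jacobian matrix `T = (∂M_i/∂x_j)` over the
rational function field `𝔽(x₁,…,xₙ)`. -/
theorem krullDim_quotient_ker_eq_rank_jacobian (𝔽 : Type*) [Field 𝔽] (n : ℕ)
    (M : Fin n → MvPolynomial (Fin n) 𝔽) (hM : SeparableSelfMap 𝔽 n M) :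
    ringKrullDim (MvPolynomial (Fin n) 𝔽 ⧸
        RingHom.ker (MvPolynomial.aeval M :
          MvPolynomial (Fin n) 𝔽 →ₐ[𝔽] MvPolynomial (Fin n) 𝔽)) =
      ((Matrix.of fun i j : Fin n =>
        algebraMap (MvPolynomial (Fin n) 𝔽) (FunctionField' 𝔽 n)
          (pderiv j (M i))).rank : ℕ) := by
  obtain ⟨s, hs, hsep⟩ := hM
  exact aux_main 𝔽 n M _ rfl s hs hsep

end
end
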